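/- arXiv:1911.08622 — 2 statements merged into one kernel-verified Lean document; each statement's English description precedes it below -/
import Mathlib

section
/- (Moser–Trudinger inequality for the E_{nr} functional.) Let n ≥ 2 and 0 < r < 1, and set δ = (n−1)(1−r)/(nr). There is a constant C, depending only on n and r and not on R, such that for every ball B_R ⊂ ℝ^n and every continuously differentiable function u with compact support contained in B_R, one has ‖u‖_{E_{nr},B_R} ≤ C (log(1 + |B_R|^{−1/(1−r)}))^{−δ} (∫_{B_R} |∇u|^n dx)^{1/n}, where |B_R| is the Lebesgue measure of B_R. -/
open MeasureTheory Metric Filter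
open scoped ENNReal RealInnerProductSpace Topology

noncomputable section

/-- Euclidean space `ℝ^n`. -/
abbrev Euc (n : ℕ) := EuclideanSpace ℝ (Fin n)

/-- The Orlicz function `N_s(t) = ∫_0^t (log(1+τ))^((n-1)/s) dτ`. -/
def NO (n : ℕ) (s t : ℝ) : ℝ :=
  ∫ τ in Set.Ioc (0:ℝ) t, (Real.log (1 + τ)) ^ (((n:ℝ) - 1) / s)

/-- Luxemburg norm `‖f‖_{(N_s),Ω}` (via `Real.sInf`, so an empty set gives junk value 0). -/
def luxNorm (n : ℕ) (s : ℝ) (Ω : Set (Euc n)) (f : Euc n → ℝ) : ℝ :=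
  sInf {lam : ℝ | 0 < lam ∧ (∫ x in Ω, NO n s (|f x| / lam)) ≤ 1}

/-- `f ∈ L log^{(n-1)/s} L(Ω)`, i.e. the Luxemburg norm is finite. -/
def MemLlogL (n : ℕ) (s : ℝ) (Ω : Set (Euc n)) (f : Euc n → ℝ) : Prop :=
  ∃ lam : ℝ, 0 < lam ∧ (∫ x in Ω, NO n s (|f x| / lam)) ≤ 1

/-- `ℝ≥0∞`-valued Luxemburg norm `‖f‖_{(N_s),Ω}` (the infimum of the empty set is `⊤`). -/
def luxNormE (n : ℕ) (s : ℝ) (Ω : Set (Euc n)) (f : Euc n → ℝ) : ℝ≥0∞ :=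
  sInf {L : ℝ≥0∞ | ∃ lam : ℝ, 0 < lam ∧ L = ENNReal.ofReal lam ∧
    (∫ x in Ω, NO n s (|f x| / lam)) ≤ 1}

/-- The exponential functional `‖v‖_{E_s,Ω}` (via `Real.sInf`). -/
def expNorm (n : ℕ) (s : ℝ) (Ω : Set (Euc n)) (v : Euc n → ℝ) : ℝ :=
  sInf {lam : ℝ | 0 < lam ∧
    (∫ x in Ω, (Real.exp (|v x / lam| ^ (s / ((n:ℝ) - 1))) - 1)) ≤ 1}

/-- `ℝ≥0∞`-valued exponential functional `‖v‖_{E_s,Ω}` (empty set gives `⊤`). -/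
def expNormE (n : ℕ) (s : ℝ) (Ω : Set (Euc n)) (v : Euc n → ℝ) : ℝ≥0∞ :=
  sInf {L : ℝ≥0∞ | ∃ lam : ℝ, 0 < lam ∧ L = ENNReal.ofReal lam ∧
    (∫ x in Ω, (Real.exp (|v x / lam| ^ (s / ((n:ℝ) - 1))) - 1)) ≤ 1}

/-- The `L^p` norm over `Ω`. -/
def lpN (n : ℕ) (p : ℝ) (Ω : Set (Euc n)) (f : Euc n → ℝ) : ℝ :=
  (∫ x in Ω, |f x| ^ p) ^ (1/p)

/-- Weak solution of `div 𝒜(x,u,∇u) = ℬ(x,u,∇u)` on `D`:  `u` is differentiable on `D`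
with `∫_D |∇u|^n < ∞`, and the weak formulation holds against all test functions. -/
def IsWeakSolution (n : ℕ) (D : Set (Euc n))
    (AA : Euc n → ℝ → Euc n → Euc n) (BB : Euc n → ℝ → Euc n → ℝ)
    (u : Euc n → ℝ) : Prop :=
  DifferentiableOn ℝ u D ∧
  IntegrableOn (fun x => ‖gradient u x‖ ^ (n:ℝ)) D ∧
  ∀ φ : Euc n → ℝ, ContDiff ℝ (⊤ : ℕ∞) φ → HasCompactSupport φ → tsupport φ ⊆ D →
    (∫ x in D, (⟪gradient φ x, AA x (u x) (gradient u x)⟫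
      + φ x * BB x (u x) (gradient u x))) = 0

/-- The structure conditions, with constant `a > 0` and nonnegative coefficients
`b, c, d, e, f, g ∈ L log^{(n-1)/r} L(D)`. -/
def StructCond (n : ℕ) (r : ℝ) (D : Set (Euc n))
    (AA : Euc n → ℝ → Euc n → Euc n) (BB : Euc n → ℝ → Euc n → ℝ)
    (a : ℝ) (b c d e f g : Euc n → ℝ) : Prop :=
  0 < a ∧
  (∀ x, 0 ≤ b x) ∧ (∀ x, 0 ≤ c x) ∧ (∀ x, 0 ≤ d x) ∧
  (∀ x, 0 ≤ e x) ∧ (∀ x, 0 ≤ f x) ∧ (∀ x, 0 ≤ g x) ∧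
  Measurable b ∧ Measurable c ∧ Measurable d ∧
  Measurable e ∧ Measurable f ∧ Measurable g ∧
  MemLlogL n r D (fun x => b x ^ ((n:ℝ)/((n:ℝ)-1))) ∧
  MemLlogL n r D d ∧
  MemLlogL n r D (fun x => e x ^ ((n:ℝ)/((n:ℝ)-1))) ∧
  MemLlogL n r D f ∧
  MemLlogL n r D g ∧
  MemLlogL n r D (fun x => c x ^ (n:ℝ)) ∧
  ∀ x ∈ D, ∀ (U : ℝ) (p : Euc n),
    ‖AA x U p‖ ≤ a * ‖p‖ ^ ((n:ℝ)-1) + b x * |U| ^ ((n:ℝ)-1) + e x ∧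
    |BB x U p| ≤ c x * ‖p‖ ^ ((n:ℝ)-1) + d x * |U| ^ ((n:ℝ)-1) + f x ∧
    ‖p‖ ^ (n:ℝ) - d x * |U| ^ (n:ℝ) - g x ≤ ⟪p, AA x U p⟫

/-- The barred structure conditions, with constant `a > 0`, `k ≥ 0` and nonnegative
coefficients `b̄, c, d̄` with `b̄^{n/(n-1)}, c^n, d̄ ∈ L log^{(n-1)/r} L(D)`. -/
def BarredStructCond (n : ℕ) (r : ℝ) (D : Set (Euc n))
    (AA : Euc n → ℝ → Euc n → Euc n) (BB : Euc n → ℝ → Euc n → ℝ)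
    (a k : ℝ) (b c d : Euc n → ℝ) : Prop :=
  0 < a ∧ 0 ≤ k ∧
  (∀ x, 0 ≤ b x) ∧ (∀ x, 0 ≤ c x) ∧ (∀ x, 0 ≤ d x) ∧
  Measurable b ∧ Measurable c ∧ Measurable d ∧
  MemLlogL n r D (fun x => b x ^ ((n:ℝ)/((n:ℝ)-1))) ∧
  MemLlogL n r D (fun x => c x ^ (n:ℝ)) ∧
  MemLlogL n r D d ∧
  ∀ x ∈ D, ∀ (U : ℝ) (p : Euc n),
    ‖AA x U p‖ ≤ a * ‖p‖ ^ ((n:ℝ)-1) + b x * (|U| + k) ^ ((n:ℝ)-1) ∧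
    |BB x U p| ≤ c x * ‖p‖ ^ ((n:ℝ)-1) + d x * (|U| + k) ^ ((n:ℝ)-1) ∧
    ‖p‖ ^ (n:ℝ) - d x * (|U| + k) ^ (n:ℝ) ≤ ⟪p, AA x U p⟫

/-- `k = (‖e^{n/(n-1)}‖^{(n-1)/n} + ‖f‖)^{1/(n-1)} + ‖g‖^{1/n}`, norms over `D`. -/
def kval (n : ℕ) (r : ℝ) (D : Set (Euc n)) (e f g : Euc n → ℝ) : ℝ :=
  ((luxNorm n r D (fun x => e x ^ ((n:ℝ)/((n:ℝ)-1)))) ^ (((n:ℝ)-1)/(n:ℝ))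
      + luxNorm n r D f) ^ (1/((n:ℝ)-1))
    + (luxNorm n r D g) ^ (1/(n:ℝ))

lemma deriv_trans_bound : ∃ K : ℝ, 0 < K ∧ (∀ s, |deriv Real.smoothTransition s| ≤ K) ∧
    (∀ s, s ∉ Set.Ioo (0:ℝ) 1 → deriv Real.smoothTransition s = 0) := by
  have hc : Continuous (deriv Real.smoothTransition) :=
    (Real.smoothTransition.contDiff (n := 1)).continuous_deriv (by norm_num)
  have h0 : ∀ s, s ∉ Set.Icc (0:ℝ) 1 → deriv Real.smoothTransition s = 0 := by
    intro s hs
    rw [Set.mem_Icc, not_and_or, not_le, not_le] at hs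
    rcases hs with hs | hs
    · have : Real.smoothTransition =ᶠ[𝓝 s] fun _ => 0 := by
        filter_upwards [gt_mem_nhds hs] with y hy
        exact Real.smoothTransition.zero_of_nonpos hy.le
      rw [this.deriv_eq]; simp
    · have : Real.smoothTransition =ᶠ[𝓝 s] fun _ => 1 := by
        filter_upwards [lt_mem_nhds hs] with y hy
        exact Real.smoothTransition.one_of_one_le hy.le
      rw [this.deriv_eq]; simp
  obtain ⟨K, hK⟩ := (isCompact_Icc (a := (0:ℝ)) (b := 1)).exists_bound_of_continuousOn hc.continuousOn
  refine ⟨max K 1, by positivity, ?_, ?_⟩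
  · intro s
    by_cases hs : s ∈ Set.Icc (0:ℝ) 1
    · exact (hK s hs).trans (le_max_left _ _)
    · rw [h0 s hs]; simp
  · intro s hs
    by_cases hs' : s ∈ Set.Icc (0:ℝ) 1
    · have hcl : IsClosed {s | deriv Real.smoothTransition s = 0} := isClosed_eq hc continuous_const
      have h01 : s = 0 ∨ s = 1 := by
        rw [Set.mem_Icc] at hs'
        by_contra hne
        push Not at hne
        exact hs ⟨lt_of_le_of_ne hs'.1 (Ne.symm hne.1), lt_of_le_of_ne hs'.2 hne.2⟩
      rcases h01 with rfl | rfl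
      · have hsub : Set.Iio (0:ℝ) ⊆ {s | deriv Real.smoothTransition s = 0} := fun y hy =>
          h0 y (by simp only [Set.mem_Iio, Set.mem_Ioi] at hy; simp only [Set.mem_Icc, not_and_or, not_le]; tauto)
        apply hcl.closure_subset_iff.2 hsub
        simp
      · have hsub : Set.Ioi (1:ℝ) ⊆ {s | deriv Real.smoothTransition s = 0} := fun y hy =>
          h0 y (by simp only [Set.mem_Iio, Set.mem_Ioi] at hy; simp only [Set.mem_Icc, not_and_or, not_le]; tauto)
        apply hcl.closure_subset_iff.2 hsub
        simp
    · exact h0 s hs'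

lemma step_en (n : ℕ) (hn : 2 ≤ n) : ∃ K : ℝ, 0 < K ∧ ∀ u : Euc n → ℝ, ContDiff ℝ 1 u →
    HasCompactSupport u → ∀ a h : ℝ, 0 ≤ a → 0 < h →
    volume {x | a + h < u x} ≤ ENNReal.ofReal (K * h ^ (-((n:ℝ)/((n:ℝ)-1)))) *
      ((∫⁻ x in {x | a < u x ∧ u x < a + h}, ‖fderiv ℝ u x‖ₑ ^ (n:ℝ)) ^ (1/((n:ℝ)-1)) *
        volume {x | a < u x}) := by
  obtain ⟨K, hK, hKb, hK0⟩ := deriv_trans_bound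
  have hn1 : (1:ℝ) < n := by exact_mod_cast hn
  set p : ℝ := (n:ℝ)/((n:ℝ)-1) with hp
  have hp0 : 0 < p := div_pos (by linarith) (by linarith)
  have hconj : Real.HolderConjugate (n:ℝ) p := Real.HolderConjugate.conjExponent hn1
  have hconj' : Real.HolderConjugate (Module.finrank ℝ (Euc n) : ℝ) p := by
    rw [finrank_euclideanSpace_fin]; exact hconj
  set c := lintegralPowLePowLIntegralFDerivConst (volume : Measure (Euc n)) p
  refine ⟨(c + 1) * K ^ p, by positivity, ?_⟩
  intro u hu hcs a h ha hh
  set φ : ℝ → ℝ := fun s => Real.smoothTransition ((s - a) / h) with hφ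
  have hφc : ContDiff ℝ 1 φ := by
    apply (Real.smoothTransition.contDiff (n := 1)).comp
    fun_prop
  set A := {x | a < u x ∧ u x < a + h} with hA
  have hAm : MeasurableSet A := by
    have : IsOpen A := (isOpen_lt continuous_const hu.continuous).inter (isOpen_lt hu.continuous continuous_const)
    exact this.measurableSet
  have hgc : ContDiff ℝ 1 (φ ∘ u) := hφc.comp hu
  have hgs : HasCompactSupport (φ ∘ u) := hcs.comp_left
    (Real.smoothTransition.zero_of_nonpos (by rw [zero_sub]; exact div_nonpos_of_nonpos_of_nonneg (by linarith) hh.le))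
  have hφd : ∀ s, deriv φ s = deriv Real.smoothTransition ((s - a)/h) * (1 / h) := by
    intro s
    have h1 : HasDerivAt (fun s : ℝ => (s - a)/h) (1/h) s := ((hasDerivAt_id s).sub_const a).div_const h
    have h2 : HasDerivAt Real.smoothTransition (deriv Real.smoothTransition ((s - a)/h)) ((s - a)/h) :=
      ((Real.smoothTransition.contDiff (n := 1)).differentiable (by norm_num) _).hasDerivAt
    exact (h2.comp s h1).deriv
  have hfd : ∀ x, ‖fderiv ℝ (φ ∘ u) x‖ₑ ≤ A.indicator (fun x => ENNReal.ofReal (K / h) * ‖fderiv ℝ u x‖ₑ) x := by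
    intro x
    have h1 : fderiv ℝ (φ ∘ u) x = deriv φ (u x) • fderiv ℝ u x := by
      have h2 := (hφc.differentiable (by norm_num) (u x)).hasDerivAt
      have h3 := (hu.differentiable (by norm_num) x).hasFDerivAt
      exact (h2.comp_hasFDerivAt x h3).fderiv
    rw [h1, enorm_smul]
    by_cases hx : x ∈ A
    · rw [Set.indicator_of_mem hx]
      gcongr
      rw [← ofReal_norm]
      apply ENNReal.ofReal_le_ofReal
      rw [hφd, norm_mul, Real.norm_eq_abs, Real.norm_of_nonneg (by positivity)]
      have h1h : (0:ℝ) ≤ 1 / h := by positivity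
      rw [div_eq_mul_one_div K h]
      exact mul_le_mul_of_nonneg_right (hKb _) h1h
    · have : deriv φ (u x) = 0 := by
        rw [hφd, hK0, zero_mul]
        intro hx'
        apply hx
        have h1 := hx'.1
        have h2 := hx'.2
        rw [div_lt_one hh] at h2
        rw [lt_div_iff₀ hh] at h1
        constructor <;> linarith
      rw [this]; simp
  have hl : volume {x | a + h < u x} ≤ ∫⁻ x, ‖(φ ∘ u) x‖ₑ ^ p := by
    have hm : MeasurableSet {x | a + h < u x} := (isOpen_lt continuous_const hu.continuous).measurableSet
    rw [← lintegral_indicator_one hm]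
    apply lintegral_mono
    intro x
    by_cases hx : x ∈ {x | a + h < u x}
    · have : (φ ∘ u) x = 1 := by
        apply Real.smoothTransition.one_of_one_le
        rw [le_div_iff₀ hh]
        have : a + h < u x := hx
        linarith
      rw [Set.indicator_of_mem hx]
      show 1 ≤ ‖(φ ∘ u) x‖ₑ ^ p
      rw [this]; simp
    · rw [Set.indicator_of_notMem hx]; simp
  have hgns := lintegral_pow_le_pow_lintegral_fderiv (volume : Measure (Euc n)) hgc hgs hconj'
  have hmeas : Measurable fun x => ‖fderiv ℝ u x‖ₑ :=
    (hu.continuous_fderiv (by norm_num)).enorm.measurable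
  have hhol : ∫⁻ x in A, ‖fderiv ℝ u x‖ₑ ≤
      (∫⁻ x in A, ‖fderiv ℝ u x‖ₑ ^ (n:ℝ)) ^ (1/(n:ℝ)) * volume A ^ (1/p) := by
    have := ENNReal.lintegral_mul_le_Lp_mul_Lq (volume.restrict A) hconj hmeas.aemeasurable
      (aemeasurable_const (b := (1:ℝ≥0∞)))
    simpa using this
  calc volume {x | a + h < u x} ≤ c * (∫⁻ x, ‖fderiv ℝ (φ ∘ u) x‖ₑ) ^ p := hl.trans hgns
    _ ≤ c * (ENNReal.ofReal (K / h) * ((∫⁻ x in A, ‖fderiv ℝ u x‖ₑ ^ (n:ℝ)) ^ (1/(n:ℝ)) * volume A ^ (1/p))) ^ p := by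
        gcongr
        refine (lintegral_mono hfd).trans ?_
        rw [lintegral_indicator hAm, lintegral_const_mul _ hmeas]
        gcongr
    _ = (c * ENNReal.ofReal (K / h) ^ p) * ((∫⁻ x in A, ‖fderiv ℝ u x‖ₑ ^ (n:ℝ)) ^ (1/((n:ℝ)-1)) * volume A) := by
        rw [ENNReal.mul_rpow_of_nonneg _ _ hp0.le, ENNReal.mul_rpow_of_nonneg _ _ hp0.le,
          ← ENNReal.rpow_mul, ← ENNReal.rpow_mul, mul_assoc]
        congr 4
        · rw [hp]; field_simp
        · rw [one_div_mul_cancel hp0.ne', ENNReal.rpow_one]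
    _ ≤ _ := by
        gcongr
        · rw [ENNReal.ofReal_rpow_of_nonneg (by positivity) hp0.le]
          rw [← ENNReal.ofReal_coe_nnreal, ← ENNReal.ofReal_mul (by positivity)]
          apply ENNReal.ofReal_le_ofReal
          rw [Real.div_rpow hK.le hh.le, Real.rpow_neg hh.le, mul_assoc, ← div_eq_mul_inv]
          gcongr
          linarith
        · exact fun x hx => hx.1

lemma prod_le_pow_mean (k : ℕ) (hk : 0 < k) (g : ℕ → ℝ) (hg : ∀ i, 0 ≤ g i) (S : ℝ)
    (hS : ∑ i ∈ Finset.range k, g i ≤ S) : ∏ i ∈ Finset.range k, g i ≤ (S / k) ^ k := by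
  have hk' : (0:ℝ) < k := by exact_mod_cast hk
  have h := Real.geom_mean_le_arith_mean (Finset.range k) (fun _ => 1) g (by simp) (by simpa using hk) (fun i _ => hg i)
  simp only [Real.rpow_one, Finset.sum_const, Finset.card_range, nsmul_eq_mul, mul_one, one_mul] at h
  have hP : 0 ≤ ∏ i ∈ Finset.range k, g i := Finset.prod_nonneg fun i _ => hg i
  calc ∏ i ∈ Finset.range k, g i = ((∏ i ∈ Finset.range k, g i) ^ ((k:ℝ)⁻¹)) ^ k := by
        rw [← Real.rpow_natCast, ← Real.rpow_mul hP, inv_mul_cancel₀ hk'.ne', Real.rpow_one]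
    _ ≤ (S / k) ^ k := by
        gcongr
        exact h.trans (by gcongr)

lemma tail (n : ℕ) (hn : 2 ≤ n) : ∃ K : ℝ, 0 < K ∧ ∀ (z : Euc n) (R : ℝ), ∀ u : Euc n → ℝ, ContDiff ℝ 1 u →
    HasCompactSupport u → tsupport u ⊆ ball z R → ∀ G : ℝ, 0 < G →
    (∫⁻ x in ball z R, ‖fderiv ℝ u x‖ₑ ^ (n:ℝ) ≤ ENNReal.ofReal (G ^ (n:ℝ))) →
    ∀ k : ℕ, 0 < k → ∀ s : ℝ, 0 < s →
    (volume {x | s < u x}).toReal ≤ (K * k * (G / s) ^ ((n:ℝ)/((n:ℝ)-1))) ^ k * (volume (ball z R)).toReal := by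
  obtain ⟨K, hK, hstep⟩ := step_en n hn
  refine ⟨K, hK, ?_⟩
  intro z R u hu hcs hsupp G hG hGi k hk s hs
  have hn1 : (0:ℝ) < (n:ℝ) - 1 := by
    have : (1:ℝ) < n := by exact_mod_cast hn
    linarith
  have hk' : (0:ℝ) < k := by exact_mod_cast hk
  set p : ℝ := (n:ℝ)/((n:ℝ)-1) with hp
  set h := s / k with hh
  have hh0 : 0 < h := by positivity
  set A : ℕ → Set (Euc n) := fun j => {x | j * h < u x ∧ u x < j * h + h} with hA
  set g : ℕ → ℝ≥0∞ := fun j => ∫⁻ x in A j, ‖fderiv ℝ u x‖ₑ ^ (n:ℝ) with hg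
  set M : ℕ → ℝ≥0∞ := fun j => volume {x | j * h < u x} with hM
  have hAm : ∀ j, MeasurableSet (A j) := by
    intro j
    exact ((isOpen_lt continuous_const hu.continuous).inter
      (isOpen_lt hu.continuous continuous_const)).measurableSet
  have hpos : ∀ t : ℝ, 0 ≤ t → {x | t < u x} ⊆ ball z R := by
    intro t ht x hx
    apply hsupp
    apply subset_tsupport
    have : t < u x := hx
    exact (lt_of_le_of_lt ht this).ne'
  have hAsub : ∀ j, A j ⊆ ball z R := fun j x hx => hpos (j * h) (by positivity) hx.1
  have hdisj : Pairwise (Function.onFun Disjoint A) := by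
    have key : ∀ i j : ℕ, i < j → Disjoint (A i) (A j) := by
      intro i j hij
      rw [Set.disjoint_left]
      rintro x ⟨_, h1⟩ ⟨h2, _⟩
      have : (i:ℝ) + 1 ≤ j := by exact_mod_cast hij
      nlinarith
    intro i j hij
    rcases lt_or_gt_of_ne hij with h1 | h1
    · exact key i j h1
    · exact (key j i h1).symm
  have hsum : ∑ j ∈ Finset.range k, g j ≤ ENNReal.ofReal (G ^ (n:ℝ)) := by
    refine le_trans ?_ hGi
    rw [hg, ← lintegral_biUnion_finset (fun i _ j _ hij => hdisj hij) (fun i _ => hAm i)]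
    apply lintegral_mono_set
    simpa using fun i _ => hAsub i
  have hgfin : ∀ j, g j ≠ ∞ := fun j => 
    ((lintegral_mono_set (hAsub j)).trans hGi).trans_lt ENNReal.ofReal_lt_top |>.ne
  have hMfin : ∀ j, M j ≠ ∞ := fun j =>
    ((measure_mono (hpos (j * h) (by positivity))).trans_lt measure_ball_lt_top).ne
  have hst : ∀ j, (M (j+1)).toReal ≤ K * h ^ (-p) * ((g j).toReal ^ (1/((n:ℝ)-1)) * (M j).toReal) := by
    intro j
    have h1 := hstep u hu hcs (j * h) h (by positivity) hh0
    have h2 : M (j+1) ≤ ENNReal.ofReal (K * h ^ (-p)) * (g j ^ (1/((n:ℝ)-1)) * M j) := by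
      convert h1 using 3
      ext x
      push_cast
      rw [add_mul, one_mul]
    have h3 := ENNReal.toReal_mono ?_ h2
    · rwa [ENNReal.toReal_mul, ENNReal.toReal_mul, ENNReal.toReal_ofReal (by positivity), ← ENNReal.toReal_rpow] at h3
    · exact ENNReal.mul_ne_top ENNReal.ofReal_ne_top (ENNReal.mul_ne_top
        (ENNReal.rpow_ne_top_of_nonneg (by positivity) (hgfin j)) (hMfin j))
  have hind : ∀ j, (M j).toReal ≤ (K * h ^ (-p)) ^ j * ((∏ i ∈ Finset.range j, (g i).toReal) ^ (1/((n:ℝ)-1)) * (M 0).toReal) := by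
    intro j
    induction j with
    | zero => simp
    | succ j ih =>
      refine (hst j).trans ?_
      calc _ ≤ K * h ^ (-p) * ((g j).toReal ^ (1/((n:ℝ)-1)) * ((K * h ^ (-p)) ^ j * ((∏ i ∈ Finset.range j, (g i).toReal) ^ (1/((n:ℝ)-1)) * (M 0).toReal))) := by
            gcongr
        _ = _ := by
            rw [Finset.prod_range_succ, Real.mul_rpow (Finset.prod_nonneg fun i _ => ENNReal.toReal_nonneg) ENNReal.toReal_nonneg]
            ring
  have hprod := prod_le_pow_mean k hk (fun i => (g i).toReal) (fun i => ENNReal.toReal_nonneg) (G ^ (n:ℝ)) (by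
    rw [← ENNReal.toReal_sum (fun i _ => hgfin i)]
    have := ENNReal.toReal_mono ENNReal.ofReal_ne_top hsum
    rwa [ENNReal.toReal_ofReal (by positivity)] at this)
  have hM0 : (M 0).toReal ≤ (volume (ball z R)).toReal := by
    apply ENNReal.toReal_mono measure_ball_lt_top.ne
    exact measure_mono (hpos _ (by simp))
  have hMk : M k = volume {x | s < u x} := by
    simp only [hM, hh]
    rw [mul_div_cancel₀ _ hk'.ne']
  rw [← hMk]
  refine (hind k).trans ?_
  calc _ ≤ (K * h ^ (-p)) ^ k * (((G ^ (n:ℝ) / k) ^ k) ^ (1/((n:ℝ)-1)) * (volume (ball z R)).toReal) := by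
        gcongr
    _ = _ := by
        rw [← mul_assoc]
        congr 1
        rw [← Real.rpow_natCast (G ^ (n:ℝ) / k), ← Real.rpow_mul (by positivity), mul_comm (k:ℝ) (1 / _),
          Real.rpow_mul (by positivity), Real.rpow_natCast, ← mul_pow]
        congr 1
        rw [Real.div_rpow (x := G ^ (n:ℝ)) (by positivity) hk'.le, ← Real.rpow_mul hG.le, hh, Real.rpow_neg (by positivity),
          Real.div_rpow hs.le hk'.le, Real.div_rpow hG.le hs.le]
        have e1 : (n:ℝ) * (1 / ((n:ℝ)-1)) = p := by rw [hp]; ring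
        have e2 : (k:ℝ) ^ p = k * (k:ℝ) ^ (1 / ((n:ℝ)-1)) := by
          rw [← Real.rpow_one_add' hk'.le (by positivity)]
          congr 1
          rw [hp]; field_simp; ring
        rw [e1, e2]
        have : (0:ℝ) < (k:ℝ) ^ (1 / ((n:ℝ)-1)) := by positivity
        have : (0:ℝ) < s ^ p := by positivity
        field_simp

lemma exp_int (n : ℕ) (hn : 2 ≤ n) : ∃ κ A : ℝ, 0 < κ ∧ 0 < A ∧ ∀ (z : Euc n) (R : ℝ), ∀ u : Euc n → ℝ, ContDiff ℝ 1 u →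
    HasCompactSupport u → tsupport u ⊆ ball z R → ∀ G : ℝ, 0 < G →
    (∫⁻ x in ball z R, ‖fderiv ℝ u x‖ₑ ^ (n:ℝ) ≤ ENNReal.ofReal (G ^ (n:ℝ))) →
    ∫ x in ball z R, Real.exp (κ * (|u x| / G) ^ ((n:ℝ)/((n:ℝ)-1))) ≤ A * (volume (ball z R)).toReal := by
  obtain ⟨K, hK, htail⟩ := tail n hn
  have hE1 : Real.exp (-1) < 1 := by simp
  have hE0 : 0 < Real.exp (-1) := Real.exp_pos _
  refine ⟨Real.exp (-2) / K, Real.exp 1 + 2 * (1 - Real.exp (-1))⁻¹, by positivity, ?_, ?_⟩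
  · have : 0 < 1 - Real.exp (-1) := by linarith
    positivity
  intro z R u hu hcs hsupp G hG hGi
  have hn1 : (0:ℝ) < (n:ℝ) - 1 := by
    have : (1:ℝ) < n := by exact_mod_cast hn
    linarith
  set p : ℝ := (n:ℝ)/((n:ℝ)-1) with hp
  have hp0 : 0 < p := div_pos (by linarith) (by linarith)
  set V := (volume (ball z R)).toReal with hV
  have hV0 : 0 ≤ V := ENNReal.toReal_nonneg
  set w : Euc n → ℝ := fun x => Real.exp (-2) / K * (|u x| / G) ^ p with hw
  have hwc : Continuous w := by
    apply Continuous.mul continuous_const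
    exact (hu.continuous.abs.div_const G).rpow_const (fun _ => Or.inr hp0.le)
  obtain ⟨b, hb⟩ := hu.continuous.bounded_above_of_compact_support hcs
  obtain ⟨N, hN⟩ := exists_nat_ge (Real.exp (-2) / K * (b / G) ^ p)
  have hwN : ∀ x, w x ≤ N := by
    intro x
    refine le_trans ?_ hN
    have := hb x
    rw [Real.norm_eq_abs] at this
    simp only [hw]
    gcongr
  -- level set bound
  have hlev : ∀ k : ℕ, (volume {x | ((k:ℝ) + 1) < w x}).toReal ≤ 2 * Real.exp (-2 * ((k:ℝ)+1)) * V := by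
    intro k
    set s : ℝ := G * ((k + 1) * K * Real.exp 2) ^ (1/p) with hs
    have hs0 : 0 < s := by positivity
    have hGs : K * ((k+1 : ℕ):ℝ) * (G / s) ^ p = Real.exp (-2) := by
      have : G / s = (((k:ℝ) + 1) * K * Real.exp 2) ^ (-(1/p)) := by
        rw [hs, Real.rpow_neg (by positivity)]
        field_simp
      rw [this, ← Real.rpow_mul (by positivity)]
      have : -(1/p) * p = -1 := by field_simp
      rw [this, Real.rpow_neg_one, Real.exp_neg]
      push_cast
      field_simp
    have hsub : {x | ((k:ℝ) + 1) < w x} ⊆ {x | s < u x} ∪ {x | s < (-u) x} := by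
      intro x hx
      have hx : ((k:ℝ) + 1) < Real.exp (-2) / K * (|u x| / G) ^ p := hx
      have h1 : s < |u x| := by
        by_contra hcon
        push Not at hcon
        have h2 : (|u x| / G) ^ p ≤ (k + 1) * K * Real.exp 2 := by
          calc (|u x| / G) ^ p ≤ (s / G) ^ p := by gcongr
            _ = _ := by
              rw [hs, mul_div_cancel_left₀ _ hG.ne', ← Real.rpow_mul (by positivity), one_div_mul_cancel hp0.ne', Real.rpow_one]
        have h3 : Real.exp (-2) / K * (|u x| / G) ^ p ≤ Real.exp (-2) / K * ((k + 1) * K * Real.exp 2) := by gcongr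
        have h4 : Real.exp (-2) / K * ((k + 1) * K * Real.exp 2) = k + 1 := by
          rw [Real.exp_neg]; field_simp
        linarith
      rcases lt_abs.1 h1 with h2 | h2
      · exact Or.inl h2
      · exact Or.inr h2
    have t1 := htail z R u hu hcs hsupp G hG hGi (k+1) (by omega) s hs0
    have t2 := htail z R (-u) hu.neg (by simpa [HasCompactSupport, tsupport, Function.support_neg] using hcs) 
      (by simpa [tsupport, Function.support_neg] using hsupp) G hG
      (by simpa [fderiv_neg] using hGi) (k+1) (by omega) s hs0
    rw [hGs] at t1 t2
    have hfin : ∀ v : Euc n → ℝ, HasCompactSupport v → volume {x | s < v x} ≠ ∞ := by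
      intro v hv
      refine ((measure_mono (t := tsupport v) ?_).trans_lt hv.isCompact.measure_lt_top).ne
      intro x hx
      apply subset_tsupport
      have : s < v x := hx
      exact (hs0.trans this).ne'
    have hf1 := hfin u hcs
    have hf2 := hfin (-u) (by simpa [HasCompactSupport, tsupport, Function.support_neg] using hcs)
    have h5 : (volume {x | ((k:ℝ) + 1) < w x}).toReal ≤ (volume {x | s < u x}).toReal + (volume {x | s < (-u) x}).toReal := by
      rw [← ENNReal.toReal_add hf1 hf2]
      exact ENNReal.toReal_mono (ENNReal.add_ne_top.2 ⟨hf1, hf2⟩) ((measure_mono hsub).trans (measure_union_le _ _))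
    have h6 : Real.exp (-2) ^ (k+1) = Real.exp (-2 * ((k:ℝ)+1)) := by
      rw [← Real.exp_nat_mul]; congr 1; push_cast; ring
    rw [h6] at t1 t2
    linarith
  have hmeas : ∀ k : ℕ, MeasurableSet {x | ((k:ℝ) + 1) < w x} := fun k =>
    (isOpen_lt continuous_const hwc).measurableSet
  have hpt : ∀ x, Real.exp (w x) ≤ Real.exp 1 + ∑ k ∈ Finset.range N,
      {x | ((k:ℝ) + 1) < w x}.indicator (fun _ => Real.exp (k + 2)) x := by
    intro x
    have hnn : ∀ k ∈ Finset.range N, 0 ≤ {x | ((k:ℝ) + 1) < w x}.indicator (fun _ => Real.exp ((k:ℝ) + 2)) x :=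
      fun k _ => Set.indicator_nonneg (fun _ _ => (Real.exp_pos _).le) _
    by_cases h1 : w x ≤ 1
    · have := Finset.sum_nonneg hnn
      have := Real.exp_le_exp.2 h1
      linarith
    · push Not at h1
      have hm2 : 1 < ⌈w x⌉₊ := Nat.lt_ceil.2 (by simpa using h1)
      obtain ⟨k, hk⟩ : ∃ k, ⌈w x⌉₊ = k + 2 := ⟨⌈w x⌉₊ - 2, by omega⟩
      have hkN : k + 2 ≤ N := by rw [← hk]; exact Nat.ceil_le.2 (hwN x)
      have hle : w x ≤ (k:ℝ) + 2 := by
        have := Nat.le_ceil (w x)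
        rw [hk] at this; push_cast at this; exact this
      have hlt : (k:ℝ) + 1 < w x := by
        have : k + 1 < ⌈w x⌉₊ := by omega
        have := Nat.lt_ceil.1 this
        push_cast at this; exact this
      have h3 := Finset.single_le_sum hnn (Finset.mem_range.2 (show k < N by omega))
      rw [Set.indicator_of_mem (show x ∈ {x | ((k:ℝ) + 1) < w x} from hlt)] at h3
      have := Real.exp_le_exp.2 hle
      have := Real.exp_pos 1
      linarith
  have hintI : ∀ k : ℕ, Integrable ({x | ((k:ℝ) + 1) < w x}.indicator (fun _ => Real.exp ((k:ℝ) + 2))) (volume.restrict (ball z R)) :=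
    fun k => (integrableOn_const (measure_ball_lt_top.ne)).indicator (hmeas k)
  have hintc : Integrable (fun _ : Euc n => Real.exp 1) (volume.restrict (ball z R)) :=
    integrableOn_const (measure_ball_lt_top.ne)
  have hmono : ∫ x in ball z R, Real.exp (w x) ≤ ∫ x in ball z R, (Real.exp 1 + ∑ k ∈ Finset.range N,
      {x | ((k:ℝ) + 1) < w x}.indicator (fun _ => Real.exp (k + 2)) x) := by
    apply integral_mono_of_nonneg
    · exact Eventually.of_forall fun x => (Real.exp_pos _).le
    · exact hintc.add (integrable_finsetSum _ fun k _ => hintI k)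
    · exact Eventually.of_forall hpt
  refine hmono.trans ?_
  rw [integral_add hintc (integrable_finsetSum _ fun k _ => hintI k), integral_finsetSum _ fun k _ => hintI k]
  have hc1 : ∫ x in ball z R, Real.exp 1 = Real.exp 1 * V := by
    rw [setIntegral_const, smul_eq_mul, mul_comm]; rfl
  have hsumle : ∑ k ∈ Finset.range N, ∫ x in ball z R, {x | ((k:ℝ) + 1) < w x}.indicator (fun _ => Real.exp ((k:ℝ) + 2)) x
      ≤ ∑ k ∈ Finset.range N, 2 * V * Real.exp (-1) ^ k := by
    apply Finset.sum_le_sum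
    intro k _
    rw [integral_indicator (hmeas k), Measure.restrict_restrict (hmeas k), setIntegral_const, smul_eq_mul]
    have h1 : (volume : Measure (Euc n)).real ({x | ((k:ℝ) + 1) < w x} ∩ ball z R) ≤ 2 * Real.exp (-2 * ((k:ℝ)+1)) * V := by
      refine le_trans ?_ (hlev k)
      apply ENNReal.toReal_mono
      · refine ((measure_mono (t := tsupport u) ?_).trans_lt hcs.isCompact.measure_lt_top).ne
        intro x hx
        apply subset_tsupport
        intro h0
        have hx : (k:ℝ) + 1 < w x := hx
        simp only [hw, h0, abs_zero, zero_div, Real.zero_rpow hp0.ne', mul_zero] at hx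
        have : (0:ℝ) ≤ k := by positivity
        linarith
      · exact measure_mono Set.inter_subset_left
    calc _ ≤ 2 * Real.exp (-2 * ((k:ℝ)+1)) * V * Real.exp (k + 2) := by gcongr
      _ = 2 * V * (Real.exp (-2 * ((k:ℝ)+1)) * Real.exp (k + 2)) := by ring
      _ = _ := by
        rw [← Real.exp_add, ← Real.exp_nat_mul]
        congr 2; ring
  have hgeo : ∑ k ∈ Finset.range N, Real.exp (-1) ^ k ≤ (1 - Real.exp (-1))⁻¹ := by
    rw [← tsum_geometric_of_lt_one hE0.le hE1]
    exact (summable_geometric_of_lt_one hE0.le hE1).sum_le_tsum _ (fun i _ => by positivity)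
  rw [← Finset.mul_sum] at hsumle
  have := mul_le_mul_of_nonneg_left hgeo (show 0 ≤ 2 * V by positivity)
  rw [hc1]
  nlinarith

lemma exp_smul_sub_le (e X : ℝ) (he0 : 0 ≤ e) (he1 : e ≤ 1) : Real.exp (e * X) - 1 ≤ e * (Real.exp X - 1) := by
  have h := convexOn_exp.2 (Set.mem_univ X) (Set.mem_univ 0) he0 (sub_nonneg.2 he1) (by ring)
  simp only [smul_eq_mul, mul_zero, add_zero, Real.exp_zero, mul_one] at h
  linarith

lemma pt_bound (V w r : ℝ) (hV : 0 < V) (hw : 0 ≤ w) (hr0 : 0 < r) (hr1 : r < 1) :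
    Real.exp (Real.log (1 + V ^ (-(1/(1-r)))) ^ (1-r) * w ^ r) - 1 ≤ 3 / V * Real.exp w := by
  have h1r : 0 < 1 - r := by linarith
  set y := V ^ (-(1/(1-r))) with hy
  have hy0 : 0 < y := by positivity
  have hyr : y ^ (1-r) = V⁻¹ := by
    rw [hy, ← Real.rpow_mul hV.le, ← Real.rpow_neg_one]
    congr 1; field_simp
  have hL0 : 0 ≤ Real.log (1 + y) := Real.log_nonneg (by linarith)
  rcases le_total V 1 with hV1 | hV1
  · have hy1 : 1 ≤ y := Real.one_le_rpow_of_pos_of_le_one_of_nonpos hV hV1 (by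
      have : 0 < 1/(1-r) := by positivity
      linarith)
    have hX : Real.log (1 + y) ^ (1-r) * w ^ r ≤ (1-r) * Real.log (1+y) + r * w :=
      Real.geom_mean_le_arith_mean2_weighted h1r.le hr0.le hL0 hw (by ring)
    have h2 : Real.exp ((1-r) * Real.log (1+y)) ≤ 2 * V⁻¹ := by
      rw [mul_comm, ← Real.rpow_def_of_pos (by linarith), ← hyr]
      calc (1+y)^(1-r) ≤ (2*y)^(1-r) := by gcongr; linarith
        _ = 2^(1-r) * y^(1-r) := Real.mul_rpow (by norm_num) hy0.le
        _ ≤ 2 * y^(1-r) := by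
          gcongr
          calc (2:ℝ)^(1-r) ≤ 2^(1:ℝ) := Real.rpow_le_rpow_of_exponent_le (by norm_num) (by linarith)
            _ = 2 := by simp
    have h3 : Real.exp (r * w) ≤ Real.exp w := Real.exp_le_exp.2 (by nlinarith)
    have h4 := Real.exp_le_exp.2 hX
    rw [Real.exp_add] at h4
    have h5 := mul_le_mul h2 h3 (Real.exp_pos _).le (by positivity)
    have h6 : 0 < V⁻¹ * Real.exp w := by positivity
    rw [div_eq_mul_inv]
    linarith
  · have hL : Real.log (1+y) ^ (1-r) ≤ V⁻¹ := by
      rw [← hyr]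
      gcongr
      have := Real.log_le_sub_one_of_pos (show 0 < 1 + y by linarith)
      linarith
    have hwr : w ^ r ≤ 1 + w := by
      have := Real.geom_mean_le_arith_mean2_weighted h1r.le hr0.le zero_le_one hw (by ring)
      simp only [Real.one_rpow, one_mul, mul_one] at this
      nlinarith
    have h1 := exp_smul_sub_le V⁻¹ (w ^ r) (by positivity) (inv_le_one_of_one_le₀ hV1)
    have h2 : Real.exp (Real.log (1 + y) ^ (1-r) * w ^ r) ≤ Real.exp (V⁻¹ * w ^ r) := by
      gcongr
    have h3 : Real.exp (w ^ r) ≤ 3 * Real.exp w := by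
      refine (Real.exp_le_exp.2 hwr).trans ?_
      rw [Real.exp_add]
      gcongr
      exact Real.exp_one_lt_three.le
    have h4 : V⁻¹ * (Real.exp (w ^ r) - 1) ≤ V⁻¹ * (3 * Real.exp w) := by gcongr; linarith
    rw [div_eq_mul_inv]
    linarith

/-- **Lemma 2.2 A (Moser–Trudinger inequality for `E_{nr}`).**  For `n ≥ 2`, `0 < r < 1`
and `δ = (n-1)(1-r)/(nr)` there is `C = C(n,r)` such that for every ball `B_R` and every
`C¹` function `u` compactly supported in `B_R`:
`‖u‖_{E_{nr},B_R} ≤ C (log(1 + |B_R|^{-1/(1-r)}))^{-δ} ‖∇u‖_{L^n(B_R)}`. -/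
theorem stmt_7 (n : ℕ) (hn : 2 ≤ n) (r : ℝ) (hr0 : 0 < r) (hr1 : r < 1) :
    ∃ C : ℝ, 0 < C ∧
      ∀ (z : Euc n) (R : ℝ), 0 < R →
      ∀ u : Euc n → ℝ, ContDiff ℝ 1 u → HasCompactSupport u → tsupport u ⊆ ball z R →
        expNorm n ((n:ℝ)*r) (ball z R) u
          ≤ C * (Real.log (1 + ((volume (ball z R)).toReal) ^ (-(1/(1-r)))))
                ^ (-(((n:ℝ)-1)*(1-r)/((n:ℝ)*r)))
            * (∫ x in ball z R, ‖gradient u x‖ ^ (n:ℝ)) ^ (1/(n:ℝ)) := by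
  obtain ⟨κ, A, hκ, hA, hexp⟩ := exp_int n hn
  have hn1 : (0:ℝ) < (n:ℝ) - 1 := by
    have : (1:ℝ) < n := by exact_mod_cast hn
    linarith
  have hn0 : (0:ℝ) < n := by linarith
  have h1r : 0 < 1 - r := by linarith
  set ε : ℝ := 1 / (1 + 3 * A) with hε
  have hε0 : 0 < ε := by positivity
  have hε1 : ε ≤ 1 := by
    rw [hε, div_le_one (by positivity)]; linarith
  set β : ℝ := (n:ℝ) * r / ((n:ℝ) - 1) with hβ
  have hβ0 : 0 < β := by positivity
  set C : ℝ := (ε * κ ^ r) ^ (-(1/β)) with hC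
  have hC0 : 0 < C := by positivity
  refine ⟨C, hC0, ?_⟩
  intro z R hR u hu hcs hsupp
  set V := (volume (ball z R)).toReal with hV
  have hV0 : 0 < V := ENNReal.toReal_pos (measure_ball_pos volume z hR).ne' measure_ball_lt_top.ne
  set L := Real.log (1 + V ^ (-(1/(1-r)))) with hL
  have hL0 : 0 < L := Real.log_pos (by
    have : 0 < V ^ (-(1/(1-r))) := by positivity
    linarith)
  set δ := ((n:ℝ)-1)*(1-r)/((n:ℝ)*r) with hδ
  set I := ∫ x in ball z R, ‖gradient u x‖ ^ (n:ℝ) with hI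
  have hI0 : 0 ≤ I := integral_nonneg fun x => by positivity
  have hnorm : ∀ x, ‖gradient u x‖ = ‖fderiv ℝ u x‖ := fun x => by
    rw [gradient, LinearIsometryEquiv.norm_map]
  have hlint : ∫⁻ x in ball z R, ‖fderiv ℝ u x‖ₑ ^ (n:ℝ) = ENNReal.ofReal I := by
    have hcont : Continuous fun x => ‖gradient u x‖ ^ (n:ℝ) := by
      simp_rw [hnorm]
      exact (hu.continuous_fderiv (by norm_num)).norm.rpow_const (fun _ => Or.inr hn0.le)
    have hint : Integrable (fun x => ‖gradient u x‖ ^ (n:ℝ)) (volume.restrict (ball z R)) :=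
      (hcont.continuousOn.integrableOn_compact (isCompact_closedBall z R)).mono_set ball_subset_closedBall
    rw [hI, ofReal_integral_eq_lintegral_ofReal hint (Eventually.of_forall fun x => by positivity)]
    apply lintegral_congr
    intro x
    rw [hnorm, ← ofReal_norm, ENNReal.ofReal_rpow_of_nonneg (norm_nonneg _) hn0.le]
  have key : ∀ G : ℝ, I ^ (1/(n:ℝ)) < G → expNorm n ((n:ℝ)*r) (ball z R) u ≤ C * L ^ (-δ) * G := by
    intro G hIG
    have hG : 0 < G := lt_of_le_of_lt (by positivity) hIG
    have hIG' : I ≤ G ^ (n:ℝ) := by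
      calc I = (I ^ (1/(n:ℝ))) ^ (n:ℝ) := by
            rw [← Real.rpow_mul hI0, one_div_mul_cancel hn0.ne', Real.rpow_one]
        _ ≤ _ := by gcongr
    have hex := hexp z R u hu hcs hsupp G hG (by rw [hlint]; exact ENNReal.ofReal_le_ofReal hIG')
    apply csInf_le ⟨0, fun y hy => hy.1.le⟩
    have hlam : 0 < C * L ^ (-δ) * G := by positivity
    refine ⟨hlam, ?_⟩
    set p := (n:ℝ)/((n:ℝ)-1) with hp
    have hp0 : 0 < p := by positivity
    have heq : ∀ x, |u x / (C * L ^ (-δ) * G)| ^ β = ε * (L ^ (1-r) * (κ * (|u x| / G) ^ p) ^ r) := by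
      intro x
      have e1 : |u x / (C * L ^ (-δ) * G)| = C⁻¹ * L ^ δ * (|u x| / G) := by
        rw [abs_div, abs_of_pos hlam, Real.rpow_neg hL0.le]
        field_simp
      have hu0 : 0 ≤ |u x| / G := by positivity
      rw [e1, Real.mul_rpow (by positivity) hu0, Real.mul_rpow (by positivity) (by positivity),
        Real.mul_rpow hκ.le (by positivity), ← Real.rpow_mul hu0, ← Real.rpow_mul hL0.le]
      have e2 : C⁻¹ ^ β = ε * κ ^ r := by
        rw [hC, Real.rpow_neg (by positivity), inv_inv, ← Real.rpow_mul (by positivity),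
          one_div_mul_cancel hβ0.ne', Real.rpow_one]
      have e3 : δ * β = 1 - r := by rw [hδ, hβ]; field_simp
      have e4 : p * r = β := by rw [hp, hβ]; ring
      rw [e2, e3, e4]; ring
    have hptw : ∀ x, Real.exp (|u x / (C * L ^ (-δ) * G)| ^ β) - 1 ≤
        ε * (3 / V) * Real.exp (κ * (|u x| / G) ^ p) := by
      intro x
      rw [heq]
      refine (exp_smul_sub_le _ _ hε0.le hε1).trans ?_
      rw [mul_assoc]
      apply mul_le_mul_of_nonneg_left _ hε0.le
      exact pt_bound V _ r hV0 (by positivity) hr0 hr1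
    have hcont : Continuous fun x => Real.exp (κ * (|u x| / G) ^ p) := by
      apply Real.continuous_exp.comp
      apply Continuous.mul continuous_const
      exact (hu.continuous.abs.div_const G).rpow_const (fun _ => Or.inr hp0.le)
    have hint : Integrable (fun x => Real.exp (κ * (|u x| / G) ^ p)) (volume.restrict (ball z R)) :=
      (hcont.continuousOn.integrableOn_compact (isCompact_closedBall z R)).mono_set ball_subset_closedBall
    calc _ ≤ ∫ x in ball z R, ε * (3 / V) * Real.exp (κ * (|u x| / G) ^ p) := by
          apply integral_mono_of_nonneg
          · refine Eventually.of_forall fun x => ?_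
            exact sub_nonneg.2 (Real.one_le_exp (by positivity))
          · exact hint.const_mul _
          · exact Eventually.of_forall hptw
      _ = ε * (3 / V) * ∫ x in ball z R, Real.exp (κ * (|u x| / G) ^ p) := integral_const_mul _ _
      _ ≤ ε * (3 / V) * (A * V) := by gcongr
      _ = 3 * A / (1 + 3 * A) := by rw [hε]; field_simp
      _ ≤ 1 := by rw [div_le_one (by positivity)]; linarith
  have hB0 : 0 < C * L ^ (-δ) := by positivity
  have : expNorm n ((n:ℝ)*r) (ball z R) u / (C * L ^ (-δ)) ≤ I ^ (1/(n:ℝ)) := by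
    apply le_of_forall_gt_imp_ge_of_dense
    intro G hG
    rw [div_le_iff₀' hB0]
    exact key G hG
  rwa [div_le_iff₀' hB0] at this
end
end

section
/- (Moser–Trudinger inequality for the E_n functional with explicit constant.) Let n ≥ 2 and let σ be the (n−1)-dimensional surface measure of the unit sphere in ℝ^n, and set C_n = (σ n^{n−1})^{1/n}. Then for every ball B_R ⊂ ℝ^n and every continuously differentiable function u with compact support contained in B_R, one has ‖u‖_{E_n,B_R} ≤ C_n^{−1} (|B_R| + 1)^{(n−1)/n} (∫_{B_R} |∇u|^n dx)^{1/n}, where |B_R| is the Lebesgue measure of B_R. -/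
open MeasureTheory Metric Filter
open scoped ENNReal RealInnerProductSpace Topology

noncomputable section

/-- The `(n-1)`-dimensional surface measure of the unit sphere in `ℝ^n`,
given by the standard identity `σ = n ⬝ |B₁|`. -/
def sigmaSurf (n : ℕ) : ℝ := (n:ℝ) * (volume (ball (0 : Euc n) 1)).toReal

namespace MT

lemma vol_lt (a : ℝ≥0∞) : volume ({t : ℝ | ENNReal.ofReal t < a} ∩ Set.Ioi 0) = a := by
  by_cases h : a = ⊤
  · subst h
    have : ({t : ℝ | ENNReal.ofReal t < ⊤} ∩ Set.Ioi 0) = Set.Ioi 0 := by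
      ext t; simp
    rw [this, Real.volume_Ioi]
  · have : ({t : ℝ | ENNReal.ofReal t < a} ∩ Set.Ioi 0) = Set.Ioo 0 a.toReal := by
      ext t
      simp only [Set.mem_inter_iff, Set.mem_ofPred_eq, Set.mem_Ioi, Set.mem_Ioo]
      constructor
      · rintro ⟨h1, h2⟩
        exact ⟨h2, (ENNReal.ofReal_lt_iff_lt_toReal h2.le h).1 h1⟩
      · rintro ⟨h1, h2⟩
        exact ⟨(ENNReal.ofReal_lt_iff_lt_toReal h1.le h).2 h2, h1⟩
    rw [this, Real.volume_Ioo, sub_zero, ENNReal.ofReal_toReal h]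

/-- Layer cake for extended nonnegative functions. -/
lemma layer {α : Type*} [MeasurableSpace α] (μ : Measure α) [SFinite μ] (f : α → ℝ≥0∞)
    (hf : Measurable f) :
    ∫⁻ x, f x ∂μ = ∫⁻ t in Set.Ioi (0:ℝ), μ {x | ENNReal.ofReal t < f x} := by
  have hS : MeasurableSet {p : α × ℝ | ENNReal.ofReal p.2 < f p.1} :=
    measurableSet_lt (by fun_prop) (by fun_prop)
  have h1 := Measure.prod_apply (μ := μ) (ν := volume.restrict (Set.Ioi (0:ℝ))) hS
  have h2 := Measure.prod_apply_symm (μ := μ) (ν := volume.restrict (Set.Ioi (0:ℝ))) hS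
  rw [h1] at h2
  rw [← show _ = ∫⁻ t in Set.Ioi (0:ℝ), μ {x | ENNReal.ofReal t < f x} from h2]
  refine lintegral_congr fun x => ?_
  rw [Measure.restrict_apply (measurable_prodMk_left hS)]
  exact (vol_lt (f x)).symm

lemma bm1 (A B D : Set ℝ) (hA : MeasurableSet A) (hB : MeasurableSet B)
    (hA0 : A.Nonempty) (hB0 : B.Nonempty) (hD : ∀ x ∈ A, ∀ y ∈ B, x + y ∈ D) :
    volume A + volume B ≤ volume D := by
  by_cases hAz : volume A = 0
  · obtain ⟨a, ha⟩ := hA0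
    rw [hAz, zero_add, ← measure_preimage_add volume a D]
    exact measure_mono fun y hy => hD a ha y hy
  by_cases hBz : volume B = 0
  · obtain ⟨b, hb⟩ := hB0
    rw [hBz, add_zero, ← measure_preimage_add_right volume b D]
    exact measure_mono fun y hy => hD y hy b hb
  refine le_of_forall_lt fun c hc => ?_
  obtain ⟨r, hr, s, hs, hrs⟩ := ENNReal.exists_lt_add_of_lt_add hc hAz hBz
  obtain ⟨K, hKA, hK, hrK⟩ := hA.exists_lt_isCompact hr
  obtain ⟨L, hLB, hL, hsL⟩ := hB.exists_lt_isCompact hs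
  have hKn : K.Nonempty := nonempty_of_measure_ne_zero (ne_bot_of_gt hrK)
  have hLn : L.Nonempty := nonempty_of_measure_ne_zero (ne_bot_of_gt hsL)
  obtain ⟨x, hx⟩ := hK.exists_isGreatest hKn
  obtain ⟨y, hy⟩ := hL.exists_isLeast hLn
  refine hrs.trans_le ?_
  have e1 : volume ((fun z => (-y) + z) ⁻¹' K) = volume K := measure_preimage_add _ _ _
  have e2 : volume ((fun z => (-x) + z) ⁻¹' L) = volume L := measure_preimage_add _ _ _
  have e3 : volume (((fun z => (-y) + z) ⁻¹' K) ∪ ((fun z => (-x) + z) ⁻¹' L))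
      = volume K + volume L := by
    rw [← e1, ← e2]
    apply measure_union₀
    · exact (hL.measurableSet.preimage (by fun_prop)).nullMeasurableSet
    · have : (((fun z => (-y) + z) ⁻¹' K) ∩ ((fun z => (-x) + z) ⁻¹' L)) ⊆ {x + y} := by
        rintro z ⟨h1, h2⟩
        have := hx.2 h1
        have := hy.2 h2
        simp only [Set.mem_singleton_iff]
        linarith
      exact measure_mono_null this (by simp)
  calc r + s ≤ volume K + volume L := add_le_add hrK.le hsL.le
    _ = _ := e3.symm
    _ ≤ volume D := by
      apply measure_mono
      rintro z (h | h)
      · have := hD _ (hKA h) _ (hLB hy.1)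
        simpa using this
      · have := hD _ (hKA hx.1) _ (hLB h)
        simpa using this

lemma bm1w (p q : ℝ) (hp : 0 < p) (hq : 0 < q) (A B D : Set ℝ) (hA : MeasurableSet A)
    (hB : MeasurableSet B)
    (hA0 : A.Nonempty) (hB0 : B.Nonempty) (hD : ∀ x ∈ A, ∀ y ∈ B, p * x + q * y ∈ D) :
    ENNReal.ofReal p * volume A + ENNReal.ofReal q * volume B ≤ volume D := by
  have e : ∀ (r : ℝ), 0 < r → ∀ S : Set ℝ,
      ENNReal.ofReal r * volume S = volume ((fun x => r⁻¹ * x) ⁻¹' S) := by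
    intro r hr S
    rw [Real.volume_preimage_mul_left (inv_ne_zero hr.ne'), inv_inv, abs_of_pos hr]
  rw [e p hp, e q hq]
  refine bm1 _ _ _ (hA.preimage (by fun_prop)) (hB.preimage (by fun_prop)) ?_ ?_ ?_
  · obtain ⟨a, ha⟩ := hA0
    exact ⟨p * a, by simpa [hp.ne'] using ha⟩
  · obtain ⟨a, ha⟩ := hB0
    exact ⟨q * a, by simpa [hq.ne'] using ha⟩
  · intro x hx y hy
    have := hD _ hx _ hy
    simpa [hp.ne', hq.ne'] using this

lemma gm (p q : ℝ) (hp : 0 < p) (hq : 0 < q) (hpq : p + q = 1) (a b : ℝ≥0∞) :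
    a ^ p * b ^ q ≤ ENNReal.ofReal p * a + ENNReal.ofReal q * b := by
  have h : (p⁻¹).HolderConjugate q⁻¹ := by
    rw [Real.holderConjugate_iff]
    refine ⟨(one_lt_inv₀ hp).2 (by linarith), by simpa using hpq⟩
  have := ENNReal.young_inequality (a ^ p) (b ^ q) h
  rw [← ENNReal.rpow_mul, ← ENNReal.rpow_mul, mul_inv_cancel₀ hp.ne', mul_inv_cancel₀ hq.ne',
    ENNReal.rpow_one, ENNReal.rpow_one, ENNReal.ofReal_inv_of_pos hp, ENNReal.ofReal_inv_of_pos hq,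
    div_eq_mul_inv, div_eq_mul_inv, inv_inv, inv_inv] at this
  rwa [mul_comm a, mul_comm b] at this

lemma pl1_bdd (p q : ℝ) (hp : 0 < p) (hq : 0 < q) (hpq : p + q = 1) (f g h : ℝ → ℝ≥0∞)
    (hf : Measurable f) (hg : Measurable g) (hh : Measurable h)
    (hfb : ⨆ x, f x ≠ ⊤) (hgb : ⨆ x, g x ≠ ⊤)
    (H : ∀ x y, f x ^ p * g y ^ q ≤ h (p * x + q * y)) :
    (∫⁻ x, f x) ^ p * (∫⁻ x, g x) ^ q ≤ ∫⁻ x, h x := by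
  set M := ⨆ x, f x with hM
  set N := ⨆ x, g x with hN
  have hfM : ∀ x, f x ≤ M := fun x => le_iSup f x
  have hgN : ∀ x, g x ≤ N := fun x => le_iSup g x
  by_cases hM0 : M = 0
  · have : ∀ x, f x = 0 := fun x => le_antisymm (hM0 ▸ hfM x) zero_le
    simp [this, hp]
  by_cases hN0 : N = 0
  · have : ∀ x, g x = 0 := fun x => le_antisymm (hN0 ▸ hgN x) zero_le
    simp [this, hq]
  set K := M ^ p * N ^ q with hK
  have hMp0 : M ^ p ≠ 0 := by simp [ENNReal.rpow_eq_zero_iff, hM0, hfb]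
  have hNq0 : N ^ q ≠ 0 := by simp [ENNReal.rpow_eq_zero_iff, hN0, hgb]
  have hMpt : M ^ p ≠ ⊤ := ENNReal.rpow_ne_top_of_nonneg hp.le hfb
  have hNqt : N ^ q ≠ ⊤ := ENNReal.rpow_ne_top_of_nonneg hq.le hgb
  have hK0 : K ≠ 0 := mul_ne_zero hMp0 hNq0
  have hKt : K ≠ ⊤ := ENNReal.mul_ne_top hMpt hNqt
  -- normalised inequality
  have key : ENNReal.ofReal p * (∫⁻ x, f x / M) + ENNReal.ofReal q * (∫⁻ x, g x / N)
      ≤ ∫⁻ x, h x / K := by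
    rw [layer volume _ (by fun_prop), layer volume _ (by fun_prop), layer volume _ (by fun_prop)]
    have mF : ∀ F : ℝ → ℝ≥0∞, Measurable F → Measurable
        (fun t : ℝ => volume {x | ENNReal.ofReal t < F x}) := by
      intro F hF
      have hS : MeasurableSet {p : ℝ × ℝ | ENNReal.ofReal p.1 < F p.2} :=
        measurableSet_lt (by fun_prop) (by fun_prop)
      exact measurable_measure_prodMk_left hS
    rw [← lintegral_const_mul _ (mF _ (by fun_prop)), ← lintegral_const_mul _ (mF _ (by fun_prop)),
      ← lintegral_add_left ((mF _ (by fun_prop)).const_mul _)]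
    refine setLIntegral_mono (mF _ (by fun_prop)) fun t ht => ?_
    have ht0 : 0 < t := ht
    by_cases ht1 : 1 ≤ t
    · have e1 : {x | ENNReal.ofReal t < f x / M} = ∅ := by
        ext x
        simp only [Set.mem_ofPred_eq, Set.mem_empty_iff_false, iff_false, not_lt]
        calc f x / M ≤ 1 := ENNReal.div_le_of_le_mul (by simpa using hfM x)
          _ ≤ _ := by simpa using ht1
      have e2 : {x | ENNReal.ofReal t < g x / N} = ∅ := by
        ext x
        simp only [Set.mem_ofPred_eq, Set.mem_empty_iff_false, iff_false, not_lt]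
        calc g x / N ≤ 1 := ENNReal.div_le_of_le_mul (by simpa using hgN x)
          _ ≤ _ := by simpa using ht1
      simp [e1, e2]
    · push Not at ht1
      have ht1' : ENNReal.ofReal t < 1 := by simpa using ht1
      have nonem : ∀ (F : ℝ → ℝ≥0∞) (S : ℝ≥0∞), S = ⨆ x, F x → S ≠ 0 → S ≠ ⊤ →
          {x | ENNReal.ofReal t < F x / S}.Nonempty := by
        intro F S hS h0 hT
        have : ENNReal.ofReal t * S < ⨆ x, F x := by
          rw [← hS]
          calc _ < 1 * S := by
                rw [ENNReal.mul_lt_mul_iff_left h0 hT]; exact ht1'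
            _ = S := one_mul S
        obtain ⟨x, hx⟩ := lt_iSup_iff.1 this
        exact ⟨x, (ENNReal.lt_div_iff_mul_lt (Or.inl h0) (Or.inl hT)).2 hx⟩
      refine bm1w p q hp hq _ _ _ (measurableSet_lt (by fun_prop) (by fun_prop))
        (measurableSet_lt (by fun_prop) (by fun_prop)) (nonem f M hM hM0 hfb)
        (nonem g N hN hN0 hgb) ?_
      intro x hx y hy
      simp only [Set.mem_ofPred_eq] at hx hy ⊢
      rw [ENNReal.lt_div_iff_mul_lt (Or.inl ‹_›) (Or.inl ‹_›)] at hx hy ⊢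
      refine lt_of_lt_of_le ?_ (H x y)
      have e : ENNReal.ofReal t * K = (ENNReal.ofReal t * M) ^ p * (ENNReal.ofReal t * N) ^ q := by
        rw [ENNReal.mul_rpow_of_nonneg _ _ hp.le, ENNReal.mul_rpow_of_nonneg _ _ hq.le]
        have : ENNReal.ofReal t = ENNReal.ofReal t ^ p * ENNReal.ofReal t ^ q := by
          rw [← ENNReal.rpow_add p q (by simpa using ht0) ENNReal.ofReal_ne_top, hpq,
            ENNReal.rpow_one]
        rw [hK]
        nth_rewrite 1 [this]
        ring
      rw [e]
      exact ENNReal.mul_lt_mul (ENNReal.rpow_lt_rpow hx hp) (ENNReal.rpow_lt_rpow hy hq)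
  simp only [div_eq_mul_inv] at key
  rw [lintegral_mul_const _ hf, lintegral_mul_const _ hg, lintegral_mul_const _ hh] at key
  have k2 := (gm p q hp hq hpq _ _).trans key
  rw [ENNReal.mul_rpow_of_nonneg _ _ hp.le, ENNReal.mul_rpow_of_nonneg _ _ hq.le,
    ENNReal.inv_rpow, ENNReal.inv_rpow] at k2
  have e4 : K⁻¹ = (M ^ p)⁻¹ * (N ^ q)⁻¹ := ENNReal.mul_inv (Or.inl hMp0) (Or.inl hMpt)
  have k3 : ((∫⁻ x, f x) ^ p * (∫⁻ x, g x) ^ q) * K⁻¹ ≤ (∫⁻ x, h x) * K⁻¹ := by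
    rw [e4] at k2 ⊢
    calc _ = _ := by ring
      _ ≤ _ := k2
  rwa [ENNReal.mul_le_mul_iff_left (ENNReal.inv_ne_zero.2 hKt) (ENNReal.inv_ne_top.2 hK0)] at k3

lemma pl1 (p q : ℝ) (hp : 0 < p) (hq : 0 < q) (hpq : p + q = 1) (f g h : ℝ → ℝ≥0∞)
    (hf : Measurable f) (hg : Measurable g) (hh : Measurable h)
    (H : ∀ x y, f x ^ p * g y ^ q ≤ h (p * x + q * y)) :
    (∫⁻ x, f x) ^ p * (∫⁻ x, g x) ^ q ≤ ∫⁻ x, h x := by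
  by_cases hf0 : ∫⁻ x, f x = 0
  · simp [hf0, hp]
  by_cases hg0 : ∫⁻ x, g x = 0
  · simp [hg0, hq]
  have T : ∀ F : ℝ → ℝ≥0∞, Measurable F → Tendsto (fun k : ℕ => ∫⁻ x, min (F x) (k : ℝ≥0∞)) atTop
      (𝓝 (∫⁻ x, F x)) := by
    intro F hF
    refine lintegral_tendsto_of_tendsto_of_monotone (fun k => by fun_prop)
      (ae_of_all _ fun x => ?_) (ae_of_all _ fun x => ?_)
    · intro a b hab
      exact min_le_min le_rfl (by exact_mod_cast hab)
    · have := (tendsto_const_nhds (x := F x) (f := (atTop : Filter ℕ))).min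
        ENNReal.tendsto_nat_nhds_top
      simpa using this
  have hlim : Tendsto (fun k : ℕ => (∫⁻ x, min (f x) (k : ℝ≥0∞)) ^ p *
      (∫⁻ x, min (g x) (k : ℝ≥0∞)) ^ q) atTop (𝓝 ((∫⁻ x, f x) ^ p * (∫⁻ x, g x) ^ q)) := by
    refine ENNReal.Tendsto.mul ((T f hf).ennrpow_const p) (Or.inl ?_)
      ((T g hg).ennrpow_const q) (Or.inl ?_)
    · simp [ENNReal.rpow_eq_zero_iff, hf0, hp, hp.not_gt]
    · simp [ENNReal.rpow_eq_zero_iff, hg0, hq, hq.not_gt]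
  refine le_of_tendsto' hlim fun k => ?_
  refine pl1_bdd p q hp hq hpq _ _ h (by fun_prop) (by fun_prop) hh ?_ ?_ ?_
  · exact ne_top_of_le_ne_top (ENNReal.natCast_ne_top k) (iSup_le fun x => min_le_right _ _)
  · exact ne_top_of_le_ne_top (ENNReal.natCast_ne_top k) (iSup_le fun x => min_le_right _ _)
  · intro x y
    refine le_trans ?_ (H x y)
    exact mul_le_mul' (ENNReal.rpow_le_rpow (min_le_left _ _) hp.le)
      (ENNReal.rpow_le_rpow (min_le_left _ _) hq.le)

/-- Prékopa–Leindler inequality. -/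
lemma pl (p q : ℝ) (hp : 0 < p) (hq : 0 < q) (hpq : p + q = 1) (n : ℕ) :
    ∀ (f g h : (Fin n → ℝ) → ℝ≥0∞)
    (_ : Measurable f) (_ : Measurable g) (_ : Measurable h)
    (_ : ∀ x y, f x ^ p * g y ^ q ≤ h (p • x + q • y)),
    (∫⁻ x, f x) ^ p * (∫⁻ x, g x) ^ q ≤ ∫⁻ x, h x := by
  induction n with
  | zero =>
    intro f g h hf hg hh H
    rw [lintegral_unique, lintegral_unique, lintegral_unique]
    have e : (volume : Measure (Fin 0 → ℝ)) Set.univ = 1 := by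
      simp [volume_pi]
    rw [e, mul_one, mul_one, mul_one]
    convert H default default
  | succ n ih =>
    intro f g h hf hg hh H
    have mp := (volume_preserving_piFinSuccAbove (fun _ : Fin (n+1) => ℝ) 0).symm
    set e := (MeasurableEquiv.piFinSuccAbove (fun _ : Fin (n+1) => ℝ) 0).symm with he
    have red : ∀ F : (Fin (n+1) → ℝ) → ℝ≥0∞, Measurable F →
        ∫⁻ x, F x = ∫⁻ t : ℝ, ∫⁻ y : Fin n → ℝ, F (e (t, y)) := by
      intro F hF
      rw [← mp.lintegral_comp hF]
      exact lintegral_prod _ (hF.comp e.measurable).aemeasurable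
    have mm : ∀ F : (Fin (n+1) → ℝ) → ℝ≥0∞, Measurable F →
        Measurable fun t : ℝ => ∫⁻ y : Fin n → ℝ, F (e (t, y)) := by
      intro F hF
      exact (hF.comp e.measurable).lintegral_prod_right'
    rw [red f hf, red g hg, red h hh]
    refine pl1 p q hp hq hpq _ _ _ (mm f hf) (mm g hg) (mm h hh) ?_
    intro s t
    refine ih _ _ _ (hf.comp (e.measurable.comp measurable_prodMk_left))
      (hg.comp (e.measurable.comp measurable_prodMk_left))
      (hh.comp (e.measurable.comp measurable_prodMk_left)) ?_
    intro x y
    refine (H _ _).trans (le_of_eq ?_)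
    congr 1
    ext i
    refine Fin.cases ?_ (fun j => ?_) i <;> simp [he, MeasurableEquiv.piFinSuccAbove, Fin.insertNthEquiv]

end MT

namespace MT

lemma bm_mul (n : ℕ) (p q : ℝ) (hp : 0 < p) (hq : 0 < q) (hpq : p + q = 1) (A B D : Set (Euc n))
    (hA : MeasurableSet A) (hB : MeasurableSet B) (hD : MeasurableSet D)
    (H : ∀ x ∈ A, ∀ y ∈ B, p • x + q • y ∈ D) :
    volume A ^ p * volume B ^ q ≤ volume D := by
  have mt : Measurable (fun x : Fin n → ℝ => (WithLp.toLp 2 x : Euc n)) :=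
    (PiLp.volume_preserving_toLp (Fin n)).measurable
  have e : ∀ S : Set (Euc n), MeasurableSet S →
      volume S = ∫⁻ x : Fin n → ℝ, S.indicator (fun _ => (1:ℝ≥0∞)) (WithLp.toLp 2 x) := by
    intro S hS
    rw [(PiLp.volume_preserving_toLp (Fin n)).lintegral_comp
      (f := S.indicator (fun _ => (1:ℝ≥0∞))) (measurable_const.indicator hS)]
    rw [lintegral_indicator hS]
    simp
  rw [e A hA, e B hB, e D hD]
  refine pl p q hp hq hpq n _ _ _ ((measurable_const.indicator hA).comp mt)
    ((measurable_const.indicator hB).comp mt) ((measurable_const.indicator hD).comp mt) ?_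
  intro x y
  by_cases hx : (WithLp.toLp 2 x : Euc n) ∈ A
  · by_cases hy : (WithLp.toLp 2 y : Euc n) ∈ B
    · have : (WithLp.toLp 2 (p • x + q • y) : Euc n) ∈ D := by
        have := H _ hx _ hy
        simpa using this
      rw [Set.indicator_of_mem hx, Set.indicator_of_mem hy, Set.indicator_of_mem this]
      simp
    · simp [Set.indicator_of_notMem hy, hq]
  · simp [Set.indicator_of_notMem hx, hp]

lemma bern (n : ℕ) (a e : ℝ) (ha : 0 ≤ a) (he : 0 ≤ e) :
    a ^ (n+1) + (n+1 : ℕ) * a ^ n * e ≤ (a + e) ^ (n+1) := by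
  induction n with
  | zero => simp
  | succ n ih =>
    rw [pow_succ (a + e)]
    have := mul_le_mul_of_nonneg_right ih (add_nonneg ha he)
    refine le_trans ?_ this
    have h1 : 0 ≤ ((n+1:ℕ):ℝ) * a ^ n * e * e := by positivity
    push_cast at *
    ring_nf at *
    nlinarith

open scoped Pointwise in
/-- Brunn–Minkowski for thickenings. -/
lemma bm_thick (n : ℕ) (hn : 1 ≤ n) (A : Set (Euc n)) (hA : MeasurableSet A)
    (h0 : volume A ≠ 0) (ht : volume A ≠ ⊤) (ε : ℝ) (hε : 0 < ε) :
    ENNReal.ofReal (((volume A).toReal ^ (1/(n:ℝ)) +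
      ε * (volume (ball (0 : Euc n) 1)).toReal ^ (1/(n:ℝ))) ^ n) ≤ volume (thickening ε A) := by
  have hn0 : (n:ℝ) ≠ 0 := by positivity
  have : Nonempty (Fin n) := ⟨⟨0, hn⟩⟩
  set ω := (volume (ball (0 : Euc n) 1)) with hω
  have hω0 : 0 < ω.toReal := ENNReal.toReal_pos (measure_ball_pos _ _ one_pos).ne'
    measure_ball_lt_top.ne
  have hV0 : 0 < (volume A).toReal := ENNReal.toReal_pos h0 ht
  set a := (volume A).toReal ^ (1/(n:ℝ)) with ha
  have han : a ^ n = (volume A).toReal := by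
    rw [ha, ← Real.rpow_natCast, ← Real.rpow_mul hV0.le]; field_simp; simp
  set w := ω.toReal ^ (1/(n:ℝ)) with hw
  have hwn : w ^ n = ω.toReal := by
    rw [hw, ← Real.rpow_natCast, ← Real.rpow_mul hω0.le]; field_simp; simp
  have ha0 : 0 < a := Real.rpow_pos_of_pos hV0 _
  have hw0 : 0 < w := Real.rpow_pos_of_pos hω0 _
  set S := a + ε * w with hS
  have hS0 : 0 < S := by positivity
  set p := a / S with hp
  set q := ε * w / S with hq
  have hp0 : 0 < p := by positivity
  have hq0 : 0 < q := by positivity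
  have hpq : p + q = 1 := by rw [hp, hq, ← add_div, ← hS, div_self hS0.ne']
  have h := bm_mul n p q hp0 hq0 hpq (p⁻¹ • A) (ball 0 (q⁻¹ * ε)) (thickening ε A)
    (hA.const_smul₀ _) measurableSet_ball isOpen_thickening.measurableSet ?_
  · have e1 : volume (p⁻¹ • A) = ENNReal.ofReal (S ^ n) := by
      rw [Measure.addHaar_smul, ← ENNReal.ofReal_toReal ht, ← ENNReal.ofReal_mul (abs_nonneg _),
        ← han, abs_of_pos (by positivity)]
      simp only [finrank_euclideanSpace, Fintype.card_fin]
      rw [← mul_pow, hp]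
      congr 2
      field_simp
    have e2 : volume (ball (0 : Euc n) (q⁻¹ * ε)) = ENNReal.ofReal (S ^ n) := by
      rw [Measure.addHaar_ball _ _ (by positivity), ← hω,
        ← ENNReal.ofReal_toReal (a := ω) measure_ball_lt_top.ne,
        ← ENNReal.ofReal_mul (by positivity), ← hwn]
      simp only [finrank_euclideanSpace, Fintype.card_fin]
      rw [← mul_pow, hq]
      congr 2
      field_simp
    rw [e1, e2, ← ENNReal.rpow_add _ _ (by simpa using by positivity) ENNReal.ofReal_ne_top, hpq,
      ENNReal.rpow_one] at h
    exact h
  · rintro _ ⟨x, hx, rfl⟩ y hy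
    rw [mem_thickening_iff]
    refine ⟨x, hx, ?_⟩
    simp only [smul_inv_smul₀ hp0.ne']
    rw [mem_ball_zero_iff] at hy
    rw [dist_eq_norm, add_sub_cancel_left, norm_smul, Real.norm_of_nonneg hq0.le]
    calc q * ‖y‖ < q * (q⁻¹ * ε) := by gcongr
      _ = ε := by field_simp

lemma bm_final (n : ℕ) (hn : 2 ≤ n) (A : Set (Euc n)) (hA : MeasurableSet A)
    (ht : volume A ≠ ⊤) (ε : ℝ) (hε : 0 < ε) :
    volume A + ENNReal.ofReal ε * (ENNReal.ofReal (n *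
      (volume (ball (0 : Euc n) 1)).toReal ^ (1/(n:ℝ))) * volume A ^ (((n:ℝ)-1)/n))
      ≤ volume (thickening ε A) := by
  have hn0 : (0:ℝ) < (n:ℝ) := by positivity
  have hn2 : (2:ℝ) ≤ n := by exact_mod_cast hn
  have hexp : 0 < ((n:ℝ)-1)/n := div_pos (by linarith) hn0
  by_cases h0 : volume A = 0
  · simp [h0, hexp]
  refine le_trans ?_ (bm_thick n (by omega) A hA h0 ht ε hε)
  set w := (volume (ball (0 : Euc n) 1)).toReal ^ (1/(n:ℝ)) with hw
  have hw0 : 0 ≤ w := by positivity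
  set V := (volume A).toReal with hV
  have hV0 : 0 < V := ENNReal.toReal_pos h0 ht
  have hVe : volume A = ENNReal.ofReal V := (ENNReal.ofReal_toReal ht).symm
  rw [hVe, ENNReal.ofReal_rpow_of_pos hV0, ← ENNReal.ofReal_mul (by positivity),
    ← ENNReal.ofReal_mul (by positivity), ← ENNReal.ofReal_add (by positivity) (by positivity)]
  apply ENNReal.ofReal_le_ofReal
  set a := V ^ (1/(n:ℝ)) with ha
  obtain ⟨m, rfl⟩ : ∃ m, n = m + 1 := ⟨n - 1, by omega⟩
  have := bern m a (ε * w) (by positivity) (by positivity)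
  refine le_trans (le_of_eq ?_) this
  have h1 : a ^ (m+1) = V := by
    rw [ha, ← Real.rpow_natCast, ← Real.rpow_mul hV0.le]; field_simp; simp
  have h2 : a ^ m = V ^ ((((m+1:ℕ):ℝ)-1)/((m+1:ℕ):ℝ)) := by
    rw [ha, ← Real.rpow_natCast, ← Real.rpow_mul hV0.le]
    congr 1
    push_cast
    field_simp; ring
  rw [h1, h2]
  ring

end MT

namespace MT

/-- Distribution function. -/
noncomputable def nu {n : ℕ} (u : Euc n → ℝ) (t : ℝ) : ℝ≥0∞ := volume {x | t ≤ |u x|}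

lemma nu_anti {n : ℕ} (u : Euc n → ℝ) : Antitone (nu u) := fun _ _ hst =>
  measure_mono fun _ hx => le_trans hst hx

lemma nu_meas {n : ℕ} (u : Euc n → ℝ) : Measurable (nu u) := (nu_anti u).measurable

lemma sub_tsupp {n : ℕ} (u : Euc n → ℝ) : {x | 0 < |u x|} ⊆ tsupport u := fun x hx =>
  subset_tsupport u (by simpa using hx)

lemma nu_fin {n : ℕ} (u : Euc n → ℝ) (hs : HasCompactSupport u) (t : ℝ) (ht : 0 < t) :
    nu u t ≠ ⊤ := by
  refine ne_top_of_le_ne_top (IsCompact.measure_lt_top hs).ne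
    (measure_mono (le_trans ?_ (sub_tsupp u)))
  intro x hx
  exact lt_of_lt_of_le ht hx

lemma meas_Ioo {n : ℕ} (u : Euc n → ℝ) (hcu : Continuous u) (a b : ℝ) :
    MeasurableSet {x | a < |u x| ∧ |u x| < b} := by
  have m : Measurable fun x => |u x| := by fun_prop
  exact (measurableSet_lt measurable_const m).inter (measurableSet_lt m measurable_const)

/-- sharp constant -/
noncomputable def cst (n : ℕ) : ℝ := n * (volume (ball (0 : Euc n) 1)).toReal ^ (1/(n:ℝ))

lemma B1 (n : ℕ) (hn : 2 ≤ n) (u : Euc n → ℝ) (hu : ContDiff ℝ 1 u) (hs : HasCompactSupport u)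
    (a b δ η : ℝ) (ha : 0 ≤ a) (hδ : 0 < δ) (hη : 0 < η) :
    ∫⁻ t in Set.Ioo (a + δ) b, ENNReal.ofReal (cst n) * nu u t ^ (((n:ℝ)-1)/n)
      ≤ ∫⁻ x in {x | a < |u x| ∧ |u x| < b}, ENNReal.ofReal (‖fderiv ℝ u x‖ + η) := by
  have hcu : Continuous u := hu.continuous
  have hcf : Continuous (fderiv ℝ u) := hu.continuous_fderiv one_ne_zero
  have uc1 : UniformContinuous (fderiv ℝ u) :=
    (hs.fderiv ℝ).uniformContinuous_of_continuous hcf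
  have uc2 : UniformContinuous u := hs.uniformContinuous_of_continuous hcu
  obtain ⟨ε0, hε0, H0⟩ := Metric.uniformContinuous_iff.1 uc1 η hη
  obtain ⟨ε1, hε1, H1⟩ := Metric.uniformContinuous_iff.1 uc2 δ hδ
  set ε := min ε0 ε1 with hε
  have hεp : 0 < ε := lt_min hε0 hε1
  have mv : ∀ x y, dist x y < ε → |u y| ≤ |u x| + ε * (‖fderiv ℝ u x‖ + η) := by
    intro x y hxy
    have h := (convex_ball x ε).norm_image_sub_le_of_norm_fderiv_le (𝕜 := ℝ) (f := u)
      (C := ‖fderiv ℝ u x‖ + η) (x := x) (y := y)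
      (fun z _ => (hu.differentiable one_ne_zero) z) ?_ (mem_ball_self hεp)
      (by rwa [mem_ball, dist_comm])
    · rw [← dist_eq_norm y x, dist_comm] at h
      have h2 : |u y| - |u x| ≤ |u y - u x| := abs_sub_abs_le_abs_sub _ _
      rw [Real.norm_eq_abs] at h
      have : (‖fderiv ℝ u x‖ + η) * dist x y ≤ (‖fderiv ℝ u x‖ + η) * ε := by gcongr
      linarith
    · intro z hz
      have := H0 (lt_of_lt_of_le (mem_ball.1 hz) (min_le_left _ _))
      rw [dist_eq_norm] at this
      have h2 := norm_le_norm_add_norm_sub' (fderiv ℝ u z) (fderiv ℝ u x)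
      linarith
  set S : Set (Euc n × ℝ) := {p | (|u p.1| < p.2 ∧ p.2 ≤ |u p.1| + ε * (‖fderiv ℝ u p.1‖ + η))
    ∧ (a < |u p.1| ∧ |u p.1| < b)} with hS
  have hSm : MeasurableSet S := by
    have m1 : Measurable fun p : Euc n × ℝ => |u p.1| := by fun_prop
    have m2 : Measurable fun p : Euc n × ℝ => |u p.1| + ε * (‖fderiv ℝ u p.1‖ + η) := by
      have : Continuous fun p : Euc n × ℝ => |u p.1| + ε * (‖fderiv ℝ u p.1‖ + η) := by fun_prop
      exact this.measurable
    exact ((measurableSet_lt m1 measurable_snd).inter (measurableSet_le measurable_snd m2)).inter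
      ((measurableSet_lt measurable_const m1).inter (measurableSet_lt m1 measurable_const))
  have step : ∀ t ∈ Set.Ioo (a + δ) b,
      ENNReal.ofReal ε * (ENNReal.ofReal (cst n) * nu u t ^ (((n:ℝ)-1)/n))
        ≤ volume ((fun x => (x, t)) ⁻¹' S) := by
    intro t ht
    have ht0 : 0 < t := by linarith [ht.1]
    have hfin := nu_fin u hs t ht0
    have hmeas : MeasurableSet {x | t ≤ |u x|} := measurableSet_le measurable_const (by fun_prop)
    have hb := bm_final n hn {x | t ≤ |u x|} hmeas hfin ε hεp
    have hsub : thickening ε {x | t ≤ |u x|} ⊆ {x | t ≤ |u x|} ∪ ((fun x => (x, t)) ⁻¹' S) := by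
      intro x hx
      obtain ⟨y, hy, hxy⟩ := mem_thickening_iff.1 hx
      by_cases h : t ≤ |u x|
      · exact Or.inl h
      · push Not at h
        right
        have hy' : t ≤ |u y| := hy
        have h1 := mv x y hxy
        have h2 := H1 (lt_of_lt_of_le hxy (min_le_right _ _))
        rw [dist_comm, Real.dist_eq] at h2
        have h3 : |u y| - |u x| ≤ |u y - u x| := abs_sub_abs_le_abs_sub _ _
        refine ⟨⟨h, by linarith⟩, ?_, ?_⟩
        · have := ht.1
          simp only
          linarith
        · exact h.trans ht.2
    have h4 := hb.trans ((measure_mono hsub).trans (measure_union_le _ _))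
    exact (ENNReal.add_le_add_iff_left hfin).1 h4
  have hmt : Measurable fun t => ENNReal.ofReal (cst n) * nu u t ^ (((n:ℝ)-1)/n) :=
    ((nu_meas u).pow_const _).const_mul _
  have hε0' : ENNReal.ofReal ε ≠ 0 := by simpa using hεp
  rw [← ENNReal.mul_le_mul_iff_right hε0' ENNReal.ofReal_ne_top,
    ← lintegral_const_mul _ hmt]
  have hgm : Measurable fun x => ENNReal.ofReal (‖fderiv ℝ u x‖ + η) := by
    have : Continuous fun x => (‖fderiv ℝ u x‖ + η) := by fun_prop
    exact this.measurable.ennreal_ofReal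
  have hvm : MeasurableSet {x | a < |u x| ∧ |u x| < b} :=
    meas_Ioo u hcu a b
  rw [← lintegral_const_mul _ hgm]
  calc _ ≤ ∫⁻ t in Set.Ioo (a + δ) b, volume ((fun x => (x, t)) ⁻¹' S) :=
        setLIntegral_mono' measurableSet_Ioo step
    _ ≤ ∫⁻ t, volume ((fun x => (x, t)) ⁻¹' S) := setLIntegral_le_lintegral _ _
    _ = (volume.prod volume) S := (Measure.prod_apply_symm hSm).symm
    _ = ∫⁻ x, volume (Prod.mk x ⁻¹' S) := Measure.prod_apply hSm
    _ ≤ ∫⁻ x, {x | a < |u x| ∧ |u x| < b}.indicator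
          (fun x => ENNReal.ofReal ε * ENNReal.ofReal (‖fderiv ℝ u x‖ + η)) x := by
        refine lintegral_mono fun x => ?_
        by_cases hx : x ∈ {x | a < |u x| ∧ |u x| < b}
        · rw [Set.indicator_of_mem hx]
          have : Prod.mk x ⁻¹' S ⊆ Set.Ioc (|u x|) (|u x| + ε * (‖fderiv ℝ u x‖ + η)) :=
            fun t ht => ht.1
          refine (measure_mono this).trans ?_
          rw [Real.volume_Ioc, add_sub_cancel_left, ENNReal.ofReal_mul hεp.le]
        · have : Prod.mk x ⁻¹' S = ∅ := by
            ext t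
            simp only [Set.mem_empty_iff_false, iff_false]
            exact fun ht => hx ht.2
          simp [this]
    _ = _ := lintegral_indicator hvm _

lemma B2 (n : ℕ) (hn : 2 ≤ n) (u : Euc n → ℝ) (hu : ContDiff ℝ 1 u) (hs : HasCompactSupport u)
    (a b δ : ℝ) (ha : 0 ≤ a) (hδ : 0 < δ) :
    ∫⁻ t in Set.Ioo (a + δ) b, ENNReal.ofReal (cst n) * nu u t ^ (((n:ℝ)-1)/n)
      ≤ ∫⁻ x in {x | a < |u x| ∧ |u x| < b}, ENNReal.ofReal ‖fderiv ℝ u x‖ := by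
  have hcf : Continuous (fderiv ℝ u) := hu.continuous_fderiv one_ne_zero
  set A := {x | a < |u x| ∧ |u x| < b} with hA
  have hAf : volume A ≠ ⊤ := by
    refine ne_top_of_le_ne_top (IsCompact.measure_lt_top hs).ne
      (measure_mono (le_trans ?_ (sub_tsupp u)))
    intro x hx
    exact lt_of_le_of_lt ha hx.1
  have key : ∀ η : ℝ, 0 < η →
      ∫⁻ t in Set.Ioo (a + δ) b, ENNReal.ofReal (cst n) * nu u t ^ (((n:ℝ)-1)/n)
      ≤ (∫⁻ x in A, ENNReal.ofReal ‖fderiv ℝ u x‖) + ENNReal.ofReal η * volume A := by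
    intro η hη
    refine (B1 n hn u hu hs a b δ η ha hδ hη).trans (le_of_eq ?_)
    have : ∀ x, ENNReal.ofReal (‖fderiv ℝ u x‖ + η)
        = ENNReal.ofReal ‖fderiv ℝ u x‖ + ENNReal.ofReal η :=
      fun x => ENNReal.ofReal_add (norm_nonneg _) hη.le
    simp only [this]
    rw [lintegral_add_right _ measurable_const, setLIntegral_const]
  have lim : Tendsto (fun η : ℝ => (∫⁻ x in A, ENNReal.ofReal ‖fderiv ℝ u x‖)
      + ENNReal.ofReal η * volume A) (𝓝[>] 0)
      (𝓝 ((∫⁻ x in A, ENNReal.ofReal ‖fderiv ℝ u x‖) + 0 * volume A)) := by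
    refine tendsto_const_nhds.add (ENNReal.Tendsto.mul_const ?_ (Or.inr hAf))
    have := (ENNReal.continuous_ofReal.tendsto (0:ℝ))
    rw [ENNReal.ofReal_zero] at this
    exact this.mono_left nhdsWithin_le_nhds
  rw [zero_mul, add_zero] at lim
  exact ge_of_tendsto lim (by filter_upwards [self_mem_nhdsWithin] with η hη using key η hη)

/-- the two measures -/
noncomputable def m1 {n : ℕ} (u : Euc n → ℝ) : Measure (Euc n) :=
  volume.withDensity (fun x => ENNReal.ofReal ‖fderiv ℝ u x‖)
/-- the two measures -/
noncomputable def m2 {n : ℕ} (u : Euc n → ℝ) : Measure ℝ :=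
  volume.withDensity (fun t => ENNReal.ofReal (cst n) * nu u t ^ (((n:ℝ)-1)/n))

lemma B3 (n : ℕ) (hn : 2 ≤ n) (u : Euc n → ℝ) (hu : ContDiff ℝ 1 u) (hs : HasCompactSupport u)
    (a b : ℝ) (ha : 0 ≤ a) :
    m2 u (Set.Ioo a b) ≤ m1 u {x | a < |u x| ∧ |u x| < b} := by
  have hcu : Continuous u := hu.continuous
  have hU : Set.Ioo a b = ⋃ k : ℕ, Set.Ioo (a + 1 / ((k:ℝ) + 1)) b := by
    ext t
    simp only [Set.mem_Ioo, Set.mem_iUnion]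
    constructor
    · rintro ⟨h1, h2⟩
      obtain ⟨k, hk⟩ := exists_nat_one_div_lt (sub_pos.2 h1)
      exact ⟨k, by linarith, h2⟩
    · rintro ⟨k, h1, h2⟩
      have : 0 < 1 / ((k:ℝ) + 1) := by positivity
      exact ⟨by linarith, h2⟩
  have hmono : Monotone fun k : ℕ => Set.Ioo (a + 1 / ((k:ℝ) + 1)) b := by
    intro i j hij
    refine Set.Ioo_subset_Ioo_left ?_
    have : (i:ℝ) ≤ j := by exact_mod_cast hij
    gcongr
  have hvm : MeasurableSet {x | a < |u x| ∧ |u x| < b} :=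
    meas_Ioo u hcu a b
  rw [hU, hmono.measure_iUnion]
  refine iSup_le fun k => ?_
  rw [m1, m2, withDensity_apply _ measurableSet_Ioo, withDensity_apply _ hvm]
  exact B2 n hn u hu hs a b _ ha (by positivity)

end MT

namespace MT

lemma C0 (n : ℕ) (hn : 2 ≤ n) (u : Euc n → ℝ) (hu : ContDiff ℝ 1 u) (hs : HasCompactSupport u)
    (T : ℝ) (W : Set ℝ) (hW : W ⊆ Set.Ioo 0 T)
    (hup : ∀ s ∈ W, ∀ t, s ≤ t → t < T → t ∈ W) :
    m2 u W ≤ m1 u {x | |u x| ∈ W} := by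
  by_cases he : W = ∅
  · simp [he]
  have hne : W.Nonempty := Set.nonempty_iff_ne_empty.2 he
  have hbd : BddBelow W := ⟨0, fun t ht => (hW ht).1.le⟩
  set i := sInf W with hi
  have hi0 : 0 ≤ i := le_csInf hne fun t ht => (hW ht).1.le
  have h1 : W ⊆ {i} ∪ Set.Ioo i T := by
    intro t ht
    rcases (csInf_le hbd ht).eq_or_lt with h | h
    · left; exact h.symm
    · right; exact ⟨h, (hW ht).2⟩
  have h2 : Set.Ioo i T ⊆ W := by
    intro t ht
    obtain ⟨s, hs, hst⟩ := exists_lt_of_csInf_lt hne ht.1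
    exact hup s hs t hst.le ht.2
  have hz : m2 u {i} = 0 := by
    have := withDensity_absolutelyContinuous (volume : Measure ℝ)
      (fun t => ENNReal.ofReal (cst n) * nu u t ^ (((n:ℝ)-1)/n))
    exact this (by simp)
  calc m2 u W ≤ m2 u {i} + m2 u (Set.Ioo i T) := (measure_mono h1).trans (measure_union_le _ _)
    _ = m2 u (Set.Ioo i T) := by rw [hz, zero_add]
    _ ≤ m1 u {x | i < |u x| ∧ |u x| < T} := B3 n hn u hu hs i T hi0
    _ ≤ _ := measure_mono fun x hx => h2 hx

lemma C1 (n : ℕ) (hn : 2 ≤ n) (u : Euc n → ℝ) (hu : ContDiff ℝ 1 u) (hs : HasCompactSupport u)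
    (T : ℝ) (hT : nu u T ≠ 0) :
    ENNReal.ofReal (cst n) * ENNReal.ofReal T ≤
      ∫⁻ x in {x | 0 < |u x| ∧ |u x| < T},
        ENNReal.ofReal ‖fderiv ℝ u x‖ * (nu u |u x| ^ (((n:ℝ)-1)/n))⁻¹ := by
  have hcu : Continuous u := hu.continuous
  have hcf : Continuous (fderiv ℝ u) := hu.continuous_fderiv one_ne_zero
  have hn2 : (2:ℝ) ≤ n := by exact_mod_cast hn
  have hκ : 0 < ((n:ℝ)-1)/n := div_pos (by linarith) (by linarith)
  set κ := ((n:ℝ)-1)/n with hκd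
  set ψ : ℝ → ℝ≥0∞ := fun t => (nu u t ^ κ)⁻¹ with hψ
  have hψm : Measurable ψ := ((nu_meas u).pow_const _).inv
  have hψmono : Monotone ψ := fun s t hst =>
    ENNReal.inv_le_inv.2 (ENNReal.rpow_le_rpow (nu_anti u hst) hκ.le)
  have hvm : Measurable fun x => |u x| := by fun_prop
  have hψv : Measurable fun x => ψ |u x| := hψm.comp hvm
  have hA := meas_Ioo u hcu 0 T
  set A := {x | 0 < |u x| ∧ |u x| < T} with hAd
  have hgm : Measurable fun x => ENNReal.ofReal ‖fderiv ℝ u x‖ := by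
    have : Continuous fun x => ‖fderiv ℝ u x‖ := by fun_prop
    exact this.measurable.ennreal_ofReal
  have hdm : Measurable fun t => ENNReal.ofReal (cst n) * nu u t ^ κ :=
    ((nu_meas u).pow_const _).const_mul _
  have e1 : ∫⁻ x in A, ENNReal.ofReal ‖fderiv ℝ u x‖ * (nu u |u x| ^ κ)⁻¹
      = ∫⁻ x in A, ψ |u x| ∂(m1 u) := by
    rw [m1, setLIntegral_withDensity_eq_setLIntegral_mul _ hgm hψv hA]
    rfl
  have e2 : ENNReal.ofReal (cst n) * ENNReal.ofReal T = ∫⁻ t in Set.Ioo 0 T, ψ t ∂(m2 u) := by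
    rw [m2, setLIntegral_withDensity_eq_setLIntegral_mul _ hdm hψm measurableSet_Ioo]
    have : ∀ t ∈ Set.Ioo 0 T, ((fun t => ENNReal.ofReal (cst n) * nu u t ^ κ) * ψ) t
        = ENNReal.ofReal (cst n) := by
      intro t ht
      have h0 : nu u t ≠ 0 := fun h => hT (le_antisymm (h ▸ nu_anti u ht.2.le) zero_le)
      have hf := nu_fin u hs t ht.1
      simp only [Pi.mul_apply, hψ]
      rw [mul_assoc, ENNReal.mul_inv_cancel, mul_one]
      · simp [ENNReal.rpow_eq_zero_iff, h0, hf]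
      · exact ENNReal.rpow_ne_top_of_nonneg hκ.le hf
    rw [setLIntegral_congr_fun measurableSet_Ioo this, setLIntegral_const, Real.volume_Ioo,
      sub_zero]
  rw [e1, e2]
  have : SFinite (m1 u) := by unfold m1; infer_instance
  have : SFinite (m2 u) := by unfold m2; infer_instance
  rw [layer _ _ hψm, layer _ _ hψv]
  refine lintegral_mono fun s => ?_
  rw [Measure.restrict_apply (measurableSet_lt measurable_const hψm),
    Measure.restrict_apply (measurableSet_lt measurable_const hψv)]
  refine (C0 n hn u hu hs T _ Set.inter_subset_right ?_).trans (measure_mono ?_)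
  · rintro a ⟨ha, ha2⟩ t hat htT
    exact ⟨lt_of_lt_of_le ha (hψmono hat), lt_of_lt_of_le ha2.1 hat, htT⟩
  · intro x hx
    exact hx

lemma C2a {n : ℕ} (u : Euc n → ℝ) (r : ℝ≥0∞) (Q : Set ℝ) (hb : BddBelow Q)
    (hQ : ∀ t ∈ Q, nu u t ≤ r) (hQu : ∀ s ∈ Q, ∀ t, s ≤ t → t ∈ Q) :
    volume {x | |u x| ∈ Q} ≤ r := by
  by_cases he : Q = ∅
  · simp [he]
  have hne : Q.Nonempty := Set.nonempty_iff_ne_empty.2 he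
  by_cases hi : sInf Q ∈ Q
  · refine (measure_mono ?_).trans (hQ _ hi)
    intro x hx
    exact csInf_le hb hx
  · have hsub : {x | |u x| ∈ Q} ⊆ ⋃ k : ℕ, {x | sInf Q + 1 / ((k:ℝ)+1) ≤ |u x|} := by
      intro x hx
      have hx' : |u x| ∈ Q := hx
      have h1 : sInf Q < |u x| := lt_of_le_of_ne (csInf_le hb hx) fun h => hi (h ▸ hx')
      obtain ⟨k, hk⟩ := exists_nat_one_div_lt (sub_pos.2 h1)
      rw [Set.mem_iUnion]
      refine ⟨k, ?_⟩
      simp only [Set.mem_ofPred_eq]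
      linarith
    refine (measure_mono hsub).trans ?_
    rw [Monotone.measure_iUnion]
    · refine iSup_le fun k => hQ _ ?_
      have hk : 0 < 1 / ((k:ℝ)+1) := by positivity
      obtain ⟨s, hs, hst⟩ := exists_lt_of_csInf_lt hne (lt_add_of_pos_right _ hk)
      exact hQu s hs _ hst.le
    · intro i j hij x hx
      have hij' : (i:ℝ) ≤ j := by exact_mod_cast hij
      have : 1 / ((j:ℝ)+1) ≤ 1 / ((i:ℝ)+1) := by gcongr
      simp only [Set.mem_ofPred_eq] at hx ⊢
      linarith

lemma logint (V m : ℝ) (hm : 0 < m) (hV : m ≤ V) :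
    ∫⁻ s in Set.Ioi (0:ℝ), ENNReal.ofReal (min V s⁻¹ - m) ≤ ENNReal.ofReal (Real.log (V / m)) := by
  have hV0 : 0 < V := hm.trans_le hV
  have hVm : V⁻¹ ≤ m⁻¹ := by gcongr
  have hVi : 0 < V⁻¹ := by positivity
  have hsub : Set.Ioi (0:ℝ) ⊆ Set.Ioc 0 V⁻¹ ∪ (Set.Ioc V⁻¹ m⁻¹ ∪ Set.Ioi m⁻¹) := by
    intro s hs
    rw [Set.Ioc_union_Ioi_eq_Ioi hVm, Set.Ioc_union_Ioi_eq_Ioi hVi.le]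
    exact hs
  have i1 : ∫⁻ s in Set.Ioc 0 V⁻¹, ENNReal.ofReal (min V s⁻¹ - m)
      ≤ ENNReal.ofReal (1 - m / V) := by
    calc _ ≤ ∫⁻ s in Set.Ioc 0 V⁻¹, ENNReal.ofReal (V - m) := by
          refine lintegral_mono fun s => ENNReal.ofReal_le_ofReal ?_
          linarith [min_le_left V s⁻¹]
      _ = _ := by
        rw [setLIntegral_const, Real.volume_Ioc, ← ENNReal.ofReal_mul (by linarith)]
        congr 1; field_simp; ring
  have i2 : ∫⁻ s in Set.Ioc V⁻¹ m⁻¹, ENNReal.ofReal (min V s⁻¹ - m)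
      ≤ ENNReal.ofReal (Real.log (V / m) - (1 - m / V)) := by
    have hIntg : IntervalIntegrable (fun s : ℝ => s⁻¹ - m) volume V⁻¹ m⁻¹ := by
      apply ContinuousOn.intervalIntegrable
      rw [Set.uIcc_of_le hVm]
      refine ContinuousOn.sub (continuousOn_inv₀.mono ?_) continuousOn_const
      intro s hs
      exact (hVi.trans_le hs.1).ne'
    calc _ ≤ ∫⁻ s in Set.Ioc V⁻¹ m⁻¹, ENNReal.ofReal (s⁻¹ - m) := by
          refine lintegral_mono fun s => ENNReal.ofReal_le_ofReal ?_
          linarith [min_le_right V s⁻¹]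
      _ = ENNReal.ofReal (∫ s in Set.Ioc V⁻¹ m⁻¹, (s⁻¹ - m)) := by
          rw [ofReal_integral_eq_lintegral_ofReal]
          · exact (intervalIntegrable_iff_integrableOn_Ioc_of_le hVm).1 hIntg
          · refine (ae_restrict_iff' measurableSet_Ioc).2 (ae_of_all _ fun s hs => ?_)
            have h0 : 0 < s := hVi.trans hs.1
            have : m ≤ s⁻¹ := by
              rw [le_inv_comm₀ hm h0]; exact hs.2
            simp only [Pi.zero_apply]
            linarith
      _ = _ := by
        rw [← intervalIntegral.integral_of_le hVm, intervalIntegral.integral_sub,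
          integral_inv_of_pos hVi (by positivity), intervalIntegral.integral_const]
        · congr 1
          have : m⁻¹ / V⁻¹ = V / m := by field_simp
          rw [this, smul_eq_mul]
          field_simp
        · apply ContinuousOn.intervalIntegrable
          rw [Set.uIcc_of_le hVm]
          refine (continuousOn_inv₀.mono ?_)
          intro s hs
          exact (hVi.trans_le hs.1).ne'
        · exact intervalIntegrable_const
  have i3 : ∫⁻ s in Set.Ioi m⁻¹, ENNReal.ofReal (min V s⁻¹ - m) = 0 := by
    rw [setLIntegral_congr_fun (g := fun _ => 0) measurableSet_Ioi]
    · simp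
    · intro s hs
      have h0 : 0 < m⁻¹ := by positivity
      have : s⁻¹ ≤ m := by
        rw [inv_le_comm₀ (h0.trans hs) hm]; exact (Set.mem_Ioi.1 hs).le
      simp only [ENNReal.ofReal_eq_zero]
      linarith [min_le_right V s⁻¹]
  have hlog : 1 - m / V ≤ Real.log (V / m) := by
    have := Real.one_sub_inv_le_log_of_pos (x := V / m) (by positivity)
    rwa [inv_div] at this
  have h1 : 0 ≤ 1 - m / V := by
    rw [sub_nonneg, div_le_one hV0]; exact hV
  calc _ ≤ ∫⁻ s in Set.Ioc 0 V⁻¹ ∪ (Set.Ioc V⁻¹ m⁻¹ ∪ Set.Ioi m⁻¹),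
        ENNReal.ofReal (min V s⁻¹ - m) := lintegral_mono_set hsub
    _ ≤ _ := lintegral_union_le _ _ _
    _ ≤ _ := add_le_add le_rfl (lintegral_union_le _ _ _)
    _ ≤ ENNReal.ofReal (1 - m / V) + (ENNReal.ofReal (Real.log (V / m) - (1 - m / V)) + 0) :=
      add_le_add i1 (add_le_add i2 i3.le)
    _ = _ := by
      rw [add_zero, ← ENNReal.ofReal_add h1 (by linarith)]
      congr 1; ring

lemma C2 (n : ℕ) (u : Euc n → ℝ) (hcu : Continuous u) (hs : HasCompactSupport u)
    (T : ℝ) (hT0 : 0 < T) (hT : nu u T ≠ 0) (V : ℝ) (B : Set (Euc n))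
    (hB : {x | 0 < |u x|} ⊆ B) (hBV : volume B = ENNReal.ofReal V) (hV0 : 0 ≤ V) :
    ∫⁻ x in {x | 0 < |u x| ∧ |u x| < T}, (nu u |u x|)⁻¹
      ≤ ENNReal.ofReal (Real.log (V / (nu u T).toReal)) := by
  have hTf := nu_fin u hs T hT0
  set m := (nu u T).toReal with hm
  have hm0 : 0 < m := ENNReal.toReal_pos hT hTf
  have hmV : m ≤ V := by
    rw [hm]
    refine ENNReal.toReal_le_of_le_ofReal hV0 ?_
    rw [← hBV]
    refine measure_mono (le_trans ?_ hB)
    intro x hx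
    exact hT0.trans_le hx
  refine le_trans ?_ (logint V m hm0 hmV)
  have hvm : Measurable fun x => |u x| := by fun_prop
  have hgm : Measurable fun x => (nu u |u x|)⁻¹ := ((nu_meas u).comp hvm).inv
  have hTm : MeasurableSet {x | T ≤ |u x|} := measurableSet_le measurable_const hvm
  rw [layer _ _ hgm]
  refine setLIntegral_mono' measurableSet_Ioi fun s hs => ?_
  have hs0 : 0 < s := hs
  rw [Measure.restrict_apply (measurableSet_lt measurable_const hgm)]
  set Z := {x | ENNReal.ofReal s < (nu u |u x|)⁻¹} ∩ {x | 0 < |u x| ∧ |u x| < T} with hZ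
  by_cases hZe : Z = ∅
  · simp [hZe]
  obtain ⟨x0, hx0⟩ := Set.nonempty_iff_ne_empty.2 hZe
  have hinv : ∀ t, ENNReal.ofReal s < (nu u t)⁻¹ → nu u t ≤ ENNReal.ofReal s⁻¹ := by
    intro t ht
    rw [ENNReal.ofReal_inv_of_pos hs0]
    exact ENNReal.le_inv_iff_le_inv.1 ht.le
  have hdis : Disjoint Z {x | T ≤ |u x|} := by
    rw [Set.disjoint_left]
    intro x hx hx2
    exact absurd hx.2.2 (not_lt.2 hx2)
  have hun : volume Z + nu u T = volume (Z ∪ {x | T ≤ |u x|}) := (measure_union hdis hTm).symm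
  have hb1 : volume (Z ∪ {x | T ≤ |u x|}) ≤ ENNReal.ofReal V := by
    rw [← hBV]
    refine measure_mono (le_trans ?_ hB)
    rintro x (hx | hx)
    · exact hx.2.1
    · exact hT0.trans_le hx
  have hb2 : volume (Z ∪ {x | T ≤ |u x|}) ≤ ENNReal.ofReal s⁻¹ := by
    set Q := {t : ℝ | 0 < t ∧ ENNReal.ofReal s < (nu u t)⁻¹} with hQ
    have hQu : ∀ s ∈ Q, ∀ t, s ≤ t → t ∈ Q := by
      rintro a ⟨ha, ha2⟩ t hat
      exact ⟨ha.trans_le hat, ha2.trans_le (ENNReal.inv_le_inv.2 (nu_anti u hat))⟩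
    refine (measure_mono ?_).trans (C2a u (ENNReal.ofReal s⁻¹) Q ⟨0, fun t ht => ht.1.le⟩
      (fun t ht => hinv t ht.2) hQu)
    rintro x (hx | hx)
    · exact ⟨hx.2.1, hx.1⟩
    · exact hQu |u x0| ⟨hx0.2.1, hx0.1⟩ _ (hx0.2.2.le.trans hx)
  have hb3 : volume Z + nu u T ≤ ENNReal.ofReal (min V s⁻¹) := by
    rw [hun, ENNReal.ofReal_min]
    exact le_min hb1 hb2
  rw [ENNReal.ofReal_sub _ hm0.le, hm, ENNReal.ofReal_toReal hTf]
  exact ENNReal.le_sub_of_add_le_right hTf hb3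

end MT

namespace MT

lemma C3 (n : ℕ) (hn : 2 ≤ n) (u : Euc n → ℝ) (hu : ContDiff ℝ 1 u) (hs : HasCompactSupport u)
    (T : ℝ) (hT0 : 0 < T) (hT : nu u T ≠ 0) (V : ℝ) (B : Set (Euc n))
    (hB : {x | 0 < |u x|} ⊆ B) (hBV : volume B = ENNReal.ofReal V) (hV0 : 0 ≤ V)
    (e : ℝ) (he : 0 ≤ e)
    (hE : (∫⁻ x in B, ENNReal.ofReal ‖fderiv ℝ u x‖ ^ (n:ℝ)) ^ (1/(n:ℝ)) ≤ ENNReal.ofReal e) :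
    cst n * T ≤ e * Real.log (V / (nu u T).toReal) ^ (((n:ℝ)-1)/n) := by
  have hcu : Continuous u := hu.continuous
  have hcf : Continuous (fderiv ℝ u) := hu.continuous_fderiv one_ne_zero
  have hn2 : (2:ℝ) ≤ n := by exact_mod_cast hn
  have hκ : 0 < ((n:ℝ)-1)/n := div_pos (by linarith) (by linarith)
  have hc0 : 0 ≤ cst n := by unfold cst; positivity
  have hvm : Measurable fun x => |u x| := by fun_prop
  have hgm : Measurable fun x => ENNReal.ofReal ‖fderiv ℝ u x‖ := by
    have : Continuous fun x => ‖fderiv ℝ u x‖ := by fun_prop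
    exact this.measurable.ennreal_ofReal
  have hψv : Measurable fun x => (nu u |u x| ^ (((n:ℝ)-1)/n))⁻¹ :=
    (((nu_meas u).comp hvm).pow_const _).inv
  have hpq : (n:ℝ).HolderConjugate ((n:ℝ)/((n:ℝ)-1)) := by
    rw [Real.holderConjugate_iff]
    refine ⟨by linarith, ?_⟩
    have : (n:ℝ) - 1 ≠ 0 := by linarith
    field_simp
    ring
  have hmV : (nu u T).toReal ≤ V := by
    refine ENNReal.toReal_le_of_le_ofReal hV0 ?_
    rw [← hBV]
    refine measure_mono (le_trans ?_ hB)
    intro x hx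
    exact hT0.trans_le hx
  have hm0 : 0 < (nu u T).toReal := ENNReal.toReal_pos hT (nu_fin u hs T hT0)
  have hlog : 0 ≤ Real.log (V / (nu u T).toReal) := Real.log_nonneg ((one_le_div hm0).2 hmV)
  have h1 := C1 n hn u hu hs T hT
  set A := {x | 0 < |u x| ∧ |u x| < T} with hA
  have h2 := ENNReal.lintegral_mul_le_Lp_mul_Lq (volume.restrict A) hpq hgm.aemeasurable
    hψv.aemeasurable
  have h3 := h1.trans h2
  have e1 : (∫⁻ x in A, ENNReal.ofReal ‖fderiv ℝ u x‖ ^ (n:ℝ)) ^ (1/(n:ℝ)) ≤ ENNReal.ofReal e := by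
    refine le_trans (ENNReal.rpow_le_rpow (lintegral_mono_set ?_) (by positivity)) hE
    intro x hx
    exact hB hx.1
  have e2 : ∀ x, ((nu u |u x| ^ (((n:ℝ)-1)/n))⁻¹) ^ ((n:ℝ)/((n:ℝ)-1)) = (nu u |u x|)⁻¹ := by
    intro x
    rw [ENNReal.inv_rpow, ← ENNReal.rpow_mul]
    have : ((n:ℝ)-1)/n * ((n:ℝ)/((n:ℝ)-1)) = 1 := by
      have : (n:ℝ) - 1 ≠ 0 := by linarith
      field_simp
    rw [this, ENNReal.rpow_one]
  simp only [e2, one_div_div] at h3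
  have e3 := C2 n u hcu hs T hT0 hT V B hB hBV hV0
  have h4 := h3.trans (mul_le_mul' e1 (ENNReal.rpow_le_rpow e3 hκ.le))
  rw [ENNReal.ofReal_rpow_of_nonneg hlog hκ.le, ← ENNReal.ofReal_mul hc0,
    ← ENNReal.ofReal_mul he] at h4
  exact (ENNReal.ofReal_le_ofReal_iff (by positivity)).1 h4

lemma C4 (n : ℕ) (hn : 2 ≤ n) (u : Euc n → ℝ) (hu : ContDiff ℝ 1 u) (hs : HasCompactSupport u)
    (T : ℝ) (hT0 : 0 < T) (V : ℝ) (B : Set (Euc n))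
    (hB : {x | 0 < |u x|} ⊆ B) (hBV : volume B = ENNReal.ofReal V) (hV0 : 0 < V)
    (e : ℝ) (he : 0 < e)
    (hE : (∫⁻ x in B, ENNReal.ofReal ‖fderiv ℝ u x‖ ^ (n:ℝ)) ^ (1/(n:ℝ)) ≤ ENNReal.ofReal e) :
    nu u T ≤ ENNReal.ofReal (V * Real.exp (-(cst n * T / e) ^ ((n:ℝ)/((n:ℝ)-1)))) := by
  by_cases hT : nu u T = 0
  · simp [hT]
  have hn2 : (2:ℝ) ≤ n := by exact_mod_cast hn
  have hc0 : 0 ≤ cst n := by unfold cst; positivity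
  have hTf := nu_fin u hs T hT0
  have h := C3 n hn u hu hs T hT0 hT V B hB hBV hV0.le e he.le hE
  rw [← ENNReal.ofReal_toReal hTf]
  set m := (nu u T).toReal with hm
  have hm0 : 0 < m := ENNReal.toReal_pos hT hTf
  have hmV : m ≤ V := by
    refine ENNReal.toReal_le_of_le_ofReal hV0.le ?_
    rw [← hBV]
    refine measure_mono (le_trans ?_ hB)
    intro x hx
    exact hT0.trans_le hx
  have hlog : 0 ≤ Real.log (V / m) := Real.log_nonneg ((one_le_div hm0).2 hmV)
  apply ENNReal.ofReal_le_ofReal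
  have h5 : cst n * T / e ≤ Real.log (V / m) ^ (((n:ℝ)-1)/n) := by
    rw [div_le_iff₀ he]; linarith
  have h6 := Real.rpow_le_rpow (by positivity) h5
    (show 0 ≤ (n:ℝ)/((n:ℝ)-1) from div_nonneg (by linarith) (by linarith))
  have e7 : ((n:ℝ)-1)/n * ((n:ℝ)/((n:ℝ)-1)) = 1 := by
    have : (n:ℝ) - 1 ≠ 0 := by linarith
    field_simp
  rw [← Real.rpow_mul hlog, e7, Real.rpow_one] at h6
  have h7 := Real.exp_le_exp.2 (neg_le_neg h6)
  rw [← Real.log_inv, Real.exp_log (by positivity), inv_div, div_le_iff₀ hV0] at h7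
  linarith

lemma tailint (V : ℝ) (hV : 0 < V) :
    ∫⁻ s in Set.Ioi (0:ℝ), ENNReal.ofReal (V * (1 + s) ^ (-V - 1)) = 1 := by
  have hd : ∀ x ∈ Set.Ici (0:ℝ), HasDerivAt (fun s : ℝ => -(1 + s) ^ (-V)) (V * (1 + x) ^ (-V - 1)) x := by
    intro x hx
    have hx0 : (0:ℝ) ≤ x := hx
    have h1 : HasDerivAt (fun s : ℝ => 1 + s) 1 x := (hasDerivAt_id x).const_add 1
    have h2 := (h1.rpow_const (p := -V) (Or.inl (by linarith))).neg
    have h3 : -(1 * -V * (1 + x) ^ (-V - 1)) = V * (1 + x) ^ (-V - 1) := by ring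
    exact h3 ▸ h2
  have hnn : ∀ x ∈ Set.Ioi (0:ℝ), 0 ≤ V * (1 + x) ^ (-V - 1) := by
    intro x hx
    have hx0 : (0:ℝ) < x := hx
    positivity
  have hlim : Tendsto (fun s : ℝ => -(1 + s) ^ (-V)) atTop (𝓝 0) := by
    have := ((tendsto_rpow_neg_atTop hV).comp (tendsto_atTop_add_const_left atTop (1:ℝ) tendsto_id)).neg
    simpa using this
  have hI := integrableOn_Ioi_deriv_of_nonneg' hd hnn hlim
  have hv := integral_Ioi_of_hasDerivAt_of_nonneg' hd hnn hlim
  rw [← ofReal_integral_eq_lintegral_ofReal hI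
    ((ae_restrict_iff' measurableSet_Ioi).2 (ae_of_all _ hnn)), hv]
  simp

lemma D1 (n : ℕ) (hn : 2 ≤ n) (u : Euc n → ℝ) (hu : ContDiff ℝ 1 u) (hs : HasCompactSupport u)
    (V : ℝ) (B : Set (Euc n))
    (hB : {x | 0 < |u x|} ⊆ B) (hBV : volume B = ENNReal.ofReal V) (hV0 : 0 < V)
    (e : ℝ) (he : 0 < e)
    (hE : (∫⁻ x in B, ENNReal.ofReal ‖fderiv ℝ u x‖ ^ (n:ℝ)) ^ (1/(n:ℝ)) ≤ ENNReal.ofReal e)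
    (lam : ℝ) (hc0 : 0 < cst n) (hlam : lam = (cst n)⁻¹ * (V + 1) ^ (((n:ℝ)-1)/n) * e) :
    (∫ x in B, (Real.exp (|u x / lam| ^ ((n:ℝ) / ((n:ℝ) - 1))) - 1)) ≤ 1 := by
  have hcu : Continuous u := hu.continuous
  have hn2 : (2:ℝ) ≤ n := by exact_mod_cast hn
  have hl0 : 0 < lam := by rw [hlam]; positivity
  set κ := ((n:ℝ)-1)/n with hκd
  set r := (n:ℝ) / ((n:ℝ) - 1) with hrd
  have hκ : 0 < κ := div_pos (by linarith) (by linarith)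
  have hr : 0 < r := div_pos (by linarith) (by linarith)
  have hκr : κ * r = 1 := by
    have : (n:ℝ) - 1 ≠ 0 := by linarith
    rw [hκd, hrd]; field_simp
  have hFc : Continuous fun x => Real.exp (|u x / lam| ^ r) - 1 := by
    have h1 : Continuous fun x => |u x / lam| ^ r :=
      (by fun_prop : Continuous fun x => |u x / lam|).rpow_const fun _ => Or.inr hr.le
    fun_prop
  have hF0 : ∀ x, 0 ≤ Real.exp (|u x / lam| ^ r) - 1 := by
    intro x
    have : 0 ≤ |u x / lam| ^ r := by positivity
    have := Real.one_le_exp this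
    linarith
  rw [integral_eq_lintegral_of_nonneg_ae (ae_of_all _ hF0) hFc.aestronglyMeasurable]
  refine ENNReal.toReal_le_of_le_ofReal zero_le_one ?_
  rw [ENNReal.ofReal_one, ← tailint V hV0,
    lintegral_eq_lintegral_meas_le _ (ae_of_all _ hF0) hFc.measurable.aemeasurable]
  refine setLIntegral_mono' measurableSet_Ioi fun s hs' => ?_
  have hs0 : 0 < s := hs'
  have hlg : 0 < Real.log (1 + s) := Real.log_pos (by linarith)
  set T := lam * Real.log (1 + s) ^ κ with hT
  have hT0 : 0 < T := by positivity
  have hsub : {x | s ≤ Real.exp (|u x / lam| ^ r) - 1} ⊆ {x | T ≤ |u x|} := by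
    intro x hx
    simp only [Set.mem_ofPred_eq] at hx ⊢
    have h1 : Real.log (1 + s) ≤ |u x / lam| ^ r := by
      rw [Real.log_le_iff_le_exp (by linarith)]; linarith
    have h2 := Real.rpow_le_rpow hlg.le h1 hκ.le
    rw [← Real.rpow_mul (abs_nonneg _), mul_comm r κ, hκr, Real.rpow_one, abs_div,
      abs_of_pos hl0, le_div_iff₀ hl0] at h2
    rw [hT]; linarith
  refine (Measure.restrict_apply_le _ _).trans ((measure_mono hsub).trans
    ((C4 n hn u hu hs T hT0 V B hB hBV hV0 e he hE).trans (ENNReal.ofReal_le_ofReal ?_)))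
  refine le_of_eq ?_
  have e1 : cst n * T / e = ((V + 1) * Real.log (1 + s)) ^ κ := by
    rw [hT, hlam, Real.mul_rpow (by positivity) hlg.le]
    field_simp
  rw [e1, ← Real.rpow_mul (by positivity), hκr, Real.rpow_one,
    Real.rpow_def_of_pos (by linarith : (0:ℝ) < 1 + s)]
  congr 2
  ring

end MT

/-- **Lemma 2.2 B (Moser–Trudinger inequality for `E_n` with explicit constant).**
With `C_n = (σ n^{n-1})^{1/n}`, for every ball `B_R` and every `C¹` function `u`
compactly supported in `B_R`:
`‖u‖_{E_n,B_R} ≤ C_n⁻¹ (|B_R| + 1)^{(n-1)/n} ‖∇u‖_{L^n(B_R)}`. -/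
theorem stmt_8 (n : ℕ) (hn : 2 ≤ n) :
    ∀ (z : Euc n) (R : ℝ), 0 < R →
    ∀ u : Euc n → ℝ, ContDiff ℝ 1 u → HasCompactSupport u → tsupport u ⊆ ball z R →
      expNorm n (n:ℝ) (ball z R) u
        ≤ ((sigmaSurf n * (n:ℝ) ^ ((n:ℝ)-1)) ^ (1/(n:ℝ)))⁻¹
          * ((volume (ball z R)).toReal + 1) ^ (((n:ℝ)-1)/(n:ℝ))
          * (∫ x in ball z R, ‖gradient u x‖ ^ (n:ℝ)) ^ (1/(n:ℝ)) := by
  intro z R hR u hu hs hsub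
  have hn2 : (2:ℝ) ≤ n := by exact_mod_cast hn
  have hn0 : (0:ℝ) < n := by linarith
  have hω0 : 0 < (volume (ball (0 : Euc n) 1)).toReal :=
    ENNReal.toReal_pos (measure_ball_pos _ _ one_pos).ne' measure_ball_lt_top.ne
  have hc : (sigmaSurf n * (n:ℝ) ^ ((n:ℝ)-1)) ^ (1/(n:ℝ)) = MT.cst n := by
    unfold sigmaSurf MT.cst
    have : (n:ℝ) * (volume (ball (0 : Euc n) 1)).toReal * (n:ℝ) ^ ((n:ℝ)-1)
        = (n:ℝ) ^ (n:ℝ) * (volume (ball (0 : Euc n) 1)).toReal := by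
      rw [Real.rpow_sub_one hn0.ne']; field_simp
    rw [this, Real.mul_rpow (by positivity) hω0.le, ← Real.rpow_mul hn0.le,
      mul_one_div_cancel hn0.ne', Real.rpow_one]
  have hc0 : 0 < MT.cst n := by unfold MT.cst; positivity
  rw [hc]
  set V := (volume (ball z R)).toReal with hV
  have hV0 : 0 < V := ENNReal.toReal_pos (measure_ball_pos _ _ hR).ne' measure_ball_lt_top.ne
  have hBV : volume (ball z R) = ENNReal.ofReal V :=
    (ENNReal.ofReal_toReal measure_ball_lt_top.ne).symm
  have hg : ∀ x, ‖gradient u x‖ = ‖fderiv ℝ u x‖ := fun x => by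
    simp [gradient]
  simp only [hg]
  have hcf : Continuous (fderiv ℝ u) := hu.continuous_fderiv one_ne_zero
  have hGc : Continuous fun x => ‖fderiv ℝ u x‖ ^ (n:ℝ) :=
    (by fun_prop : Continuous fun x => ‖fderiv ℝ u x‖).rpow_const fun _ => Or.inr hn0.le
  have hGi : IntegrableOn (fun x => ‖fderiv ℝ u x‖ ^ (n:ℝ)) (ball z R) :=
    (hGc.continuousOn.integrableOn_compact (isCompact_closedBall z R)).mono_set
      ball_subset_closedBall
  set E := ∫ x in ball z R, ‖fderiv ℝ u x‖ ^ (n:ℝ) with hEd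
  have hE0 : 0 ≤ E := integral_nonneg fun x => by positivity
  have hEl : (∫⁻ x in ball z R, ENNReal.ofReal ‖fderiv ℝ u x‖ ^ (n:ℝ)) = ENNReal.ofReal E := by
    rw [hEd, ofReal_integral_eq_lintegral_ofReal hGi (ae_of_all _ fun x => by positivity)]
    refine lintegral_congr fun x => ?_
    rw [ENNReal.ofReal_rpow_of_nonneg (norm_nonneg _) hn0.le]
  have hB : {x | 0 < |u x|} ⊆ ball z R := (MT.sub_tsupp u).trans hsub
  have key : ∀ e, 0 < e → E ^ (1/(n:ℝ)) ≤ e → expNorm n (n:ℝ) (ball z R) u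
      ≤ (MT.cst n)⁻¹ * (V + 1) ^ (((n:ℝ)-1)/(n:ℝ)) * e := by
    intro e he hEe
    refine csInf_le ⟨0, fun l hl => hl.1.le⟩ ⟨by positivity, ?_⟩
    refine MT.D1 n hn u hu hs V (ball z R) hB hBV hV0 e he ?_ _ hc0 rfl
    rw [hEl, ENNReal.ofReal_rpow_of_nonneg hE0 (by positivity)]
    exact ENNReal.ofReal_le_ofReal hEe
  have hEn : 0 ≤ E ^ (1/(n:ℝ)) := by positivity
  have lim : Tendsto (fun η : ℝ => (MT.cst n)⁻¹ * (V + 1) ^ (((n:ℝ)-1)/(n:ℝ)) *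
      (E ^ (1/(n:ℝ)) + η)) (𝓝[>] 0)
      (𝓝 ((MT.cst n)⁻¹ * (V + 1) ^ (((n:ℝ)-1)/(n:ℝ)) * (E ^ (1/(n:ℝ)) + 0))) := by
    refine Tendsto.mono_left ?_ nhdsWithin_le_nhds
    exact (by fun_prop : Continuous fun η : ℝ => (MT.cst n)⁻¹ * (V + 1) ^ (((n:ℝ)-1)/(n:ℝ)) *
      (E ^ (1/(n:ℝ)) + η)).tendsto 0
  rw [add_zero] at lim
  refine ge_of_tendsto lim ?_
  filter_upwards [self_mem_nhdsWithin] with η hη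
  have hη0 : (0:ℝ) < η := hη
  exact key _ (by linarith) (by linarith)
end
end
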